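/- arXiv:1807.07736 — 4 statements merged into one kernel-verified Lean document; each statement's English description precedes it below -/
import Mathlib

section
/- Let N be a positive integer, k an integer, and for i = 1,…,N let α_i, β_i ∈ ℝ and p_i ∈ ℝ, p_i ≠ 0. Define f_n^{(i)}(x,t,y) = α_i p_i^n e^{η_i} + β_i (−p_i)^n e^{−η_i} with η_i = p_i x + 4 p_i³ t + y/p_i, and set τ_N(k) = e^{−xy} ρ_N(k) / ∏_{i=1}^N p_i^k. Then the pair τ = τ_N(k), τ̄ = τ_N(k+1) satisfies the bilinear equations D_x D_y τ·τ = −2 τ̄², D_x D_y τ̄·τ̄ = −2 τ², D_x² τ·τ̄ = 0, and (D_x³ − D_t) τ·τ̄ = 0. In particular, θ = 2 log( ρ_N(k)/ρ_N(k+1) ) satisfies the potential defocusing mKdV equation θ_t = θ_{xxx} − (1/2)θ_x³ on any open set where ρ_N(k) and ρ_N(k+1) are both positive. -/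
/-!
Write `R m` for the matrix of `ρ_N(m)`. Then `∂_x R m = R (m + 1)`, `∂_y R m = R (m - 1)` and
`∂_t R m = 4 R (m + 3)`, while `R (m + 2) = P² R m` for the diagonal matrix `P` of the `p_i`.
Where `ρ_N(m)` and `ρ_N(m + 1)` do not vanish, the logarithmic derivatives of the determinants are
traces of products of `C = (R m)⁻¹ R (m + 1)` and `C' = (R (m + 1))⁻¹ R (m + 2)`. Both are companion
matrices, since multiplying `R m` by `C` shifts its columns, so they differ only in the last
column: `C' - C` has rank one. The bilinear equations for `ρ_N` are then the identities
`tr D² = (tr D)²`, `tr D³ = (tr D)³` and `det (1 + X D) = 1 + tr (X D)` for a rank-one matrix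
`D = C' - C`. Both sides of the equations are continuous in the parameters `α_i, β_i, log |p_i|`,
and the determinants, being analytic in them and not identically zero, are nonzero for a dense
set of parameters; so the equations hold in general. The factor `e^{-xy} / ∏ p_i^m` acts on Hirota
derivatives as a gauge factor and makes `τ_N(m)` periodic in `m` with period two.
-/

open Matrix Filter Topology Function
open scoped ContDiff Matrix.Norms.Operator

section HirotaOperators

variable {𝕜 : Type*} [NontriviallyNormedField 𝕜]

/-- Hirota's `D f·g` for functions of one variable. -/
noncomputable def hirotaD (f g : 𝕜 → 𝕜) (x : 𝕜) : 𝕜 :=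
  deriv f x * g x - f x * deriv g x

/-- Hirota's `D² f·g` for functions of one variable. -/
noncomputable def hirotaD2 (f g : 𝕜 → 𝕜) (x : 𝕜) : 𝕜 :=
  deriv (deriv f) x * g x - 2 * deriv f x * deriv g x + f x * deriv (deriv g) x

/-- Hirota's `D³ f·g` for functions of one variable. -/
noncomputable def hirotaD3 (f g : 𝕜 → 𝕜) (x : 𝕜) : 𝕜 :=
  deriv (deriv (deriv f)) x * g x - 3 * deriv (deriv f) x * deriv g x
    + 3 * deriv f x * deriv (deriv g) x - f x * deriv (deriv (deriv g)) x

/-- Hirota's `D_x D_y F·G` for functions of two variables; in the mixed derivatives the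
`x`-derivative is taken first. -/
noncomputable def hirotaDxDy (F G : 𝕜 → 𝕜 → 𝕜) (x y : 𝕜) : 𝕜 :=
  deriv (fun y' => deriv (fun x' => F x' y') x) y * G x y
    - deriv (fun x' => F x' y) x * deriv (fun y' => G x y') y
    - deriv (fun y' => F x y') y * deriv (fun x' => G x' y) x
    + F x y * deriv (fun y' => deriv (fun x' => G x' y') x) y

variable {f g a b a₁ b₁ : 𝕜 → 𝕜} {x : 𝕜}

theorem hasDerivAt_deriv_of_hasDerivAt_mul {a₁ : 𝕜}
    (hf : ∀ᶠ z in 𝓝 x, HasDerivAt f (f z * a z) z) (ha : HasDerivAt a a₁ x) :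
    HasDerivAt (deriv f) (f x * (a₁ + a x ^ 2)) x := by
  have hderiv : deriv f =ᶠ[𝓝 x] f * a := hf.mono fun z hz => hz.deriv
  refine ((hf.self_of_nhds.mul ha).congr_of_eventuallyEq hderiv).congr_deriv ?_
  ring

theorem hasDerivAt_deriv_deriv_of_hasDerivAt_mul {a₂ : 𝕜}
    (hf : ∀ᶠ z in 𝓝 x, HasDerivAt f (f z * a z) z)
    (ha : ∀ᶠ z in 𝓝 x, HasDerivAt a (a₁ z) z) (ha₁ : HasDerivAt a₁ a₂ x) :
    HasDerivAt (deriv (deriv f)) (f x * (a₂ + 3 * a x * a₁ x + a x ^ 3)) x := by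
  have hderiv : deriv (deriv f) =ᶠ[𝓝 x] f * (a₁ + a ^ 2) := by
    filter_upwards [hf.eventually_nhds, ha] with z hfz haz
    exact (hasDerivAt_deriv_of_hasDerivAt_mul hfz haz).deriv
  have hprod := hf.self_of_nhds.mul (ha₁.add (ha.self_of_nhds.pow 2))
  refine (hprod.congr_of_eventuallyEq hderiv).congr_deriv ?_
  simp only [Pi.add_apply, Pi.pow_apply]
  push_cast
  ring

theorem hirotaD2_of_hasDerivAt_mul {a₁ b₁ : 𝕜}
    (hf : ∀ᶠ z in 𝓝 x, HasDerivAt f (f z * a z) z) (ha : HasDerivAt a a₁ x)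
    (hg : ∀ᶠ z in 𝓝 x, HasDerivAt g (g z * b z) z) (hb : HasDerivAt b b₁ x) :
    hirotaD2 f g x = f x * g x * (a₁ + b₁ + (a x - b x) ^ 2) := by
  rw [hirotaD2, (hasDerivAt_deriv_of_hasDerivAt_mul hf ha).deriv,
    (hasDerivAt_deriv_of_hasDerivAt_mul hg hb).deriv, hf.self_of_nhds.deriv,
    hg.self_of_nhds.deriv]
  ring

theorem hirotaD3_of_hasDerivAt_mul {a₂ b₂ : 𝕜}
    (hf : ∀ᶠ z in 𝓝 x, HasDerivAt f (f z * a z) z)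
    (ha : ∀ᶠ z in 𝓝 x, HasDerivAt a (a₁ z) z) (ha₁ : HasDerivAt a₁ a₂ x)
    (hg : ∀ᶠ z in 𝓝 x, HasDerivAt g (g z * b z) z)
    (hb : ∀ᶠ z in 𝓝 x, HasDerivAt b (b₁ z) z) (hb₁ : HasDerivAt b₁ b₂ x) :
    hirotaD3 f g x = f x * g x *
      (a₂ - b₂ + 3 * (a x - b x) * (a₁ x + b₁ x) + (a x - b x) ^ 3) := by
  rw [hirotaD3, (hasDerivAt_deriv_deriv_of_hasDerivAt_mul hf ha ha₁).deriv,
    (hasDerivAt_deriv_deriv_of_hasDerivAt_mul hg hb hb₁).deriv,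
    (hasDerivAt_deriv_of_hasDerivAt_mul hf ha.self_of_nhds).deriv,
    (hasDerivAt_deriv_of_hasDerivAt_mul hg hb.self_of_nhds).deriv, hf.self_of_nhds.deriv,
    hg.self_of_nhds.deriv]
  ring

theorem hirotaDxDy_self_of_deriv_eq_mul {F : 𝕜 → 𝕜 → 𝕜} {y a₁ : 𝕜}
    (hx : ∀ᶠ y' in 𝓝 y, deriv (fun x' => F x' y') x = F x y' * a y')
    (hy : DifferentiableAt 𝕜 (F x) y) (ha : HasDerivAt a a₁ y) :
    hirotaDxDy F F x y = 2 * F x y ^ 2 * a₁ := by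
  have hxy := ((hy.hasDerivAt.mul ha).congr_of_eventuallyEq hx).deriv
  rw [hirotaDxDy, hxy, hx.self_of_nhds]
  ring

end HirotaOperators

section Gauge

variable {𝕜 : Type*} [NontriviallyNormedField 𝕜] {f g e₁ e₂ : 𝕜 → 𝕜} {l x : 𝕜}

theorem deriv_gauge_mul (he : ∀ z, HasDerivAt e₁ (l * e₁ z) z) (hf : Differentiable 𝕜 f) :
    deriv (fun z => e₁ z * f z) = fun z => e₁ z * (deriv f z + l * f z) := by
  funext z
  rw [((he z).fun_mul (hf z).hasDerivAt).deriv]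
  ring

theorem deriv_deriv_gauge_mul (he : ∀ z, HasDerivAt e₁ (l * e₁ z) z) (hf : ContDiff 𝕜 2 f) :
    deriv (deriv fun z => e₁ z * f z) =
      fun z => e₁ z * (deriv (deriv f) z + 2 * l * deriv f z + l ^ 2 * f z) := by
  have hf₀ : Differentiable 𝕜 f := hf.differentiable two_ne_zero
  have hf₁ : Differentiable 𝕜 (deriv f) := hf.differentiable_deriv_two
  rw [deriv_gauge_mul he hf₀, deriv_gauge_mul he (hf₁.fun_add (hf₀.const_mul l))]
  funext z
  rw [deriv_fun_add (hf₁ z) ((hf₀ z).const_mul l), deriv_const_mul _ (hf₀ z)]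
  ring

theorem deriv_deriv_deriv_gauge_mul (he : ∀ z, HasDerivAt e₁ (l * e₁ z) z)
    (hf : ContDiff 𝕜 3 f) :
    deriv (deriv (deriv fun z => e₁ z * f z)) = fun z => e₁ z * (deriv (deriv (deriv f)) z
      + 3 * l * deriv (deriv f) z + 3 * l ^ 2 * deriv f z + l ^ 3 * f z) := by
  have hf₀ : Differentiable 𝕜 f := hf.differentiable three_ne_zero
  have hf' : ContDiff 𝕜 2 (deriv f) := ContDiff.deriv' hf
  have hf₁ : Differentiable 𝕜 (deriv f) := hf'.differentiable two_ne_zero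
  rw [deriv_gauge_mul he hf₀, deriv_deriv_gauge_mul he
    (hf'.add (contDiff_const.mul (hf.of_le (by norm_num))))]
  have hadd :
      deriv (fun z => deriv f z + l * f z) = fun z => deriv (deriv f) z + l * deriv f z := by
    funext z
    rw [deriv_fun_add (hf₁ z) ((hf₀ z).const_mul l), deriv_const_mul _ (hf₀ z)]
  funext z
  rw [hadd, deriv_fun_add (hf'.differentiable_deriv_two z) ((hf₁ z).const_mul l),
    deriv_const_mul _ (hf₁ z)]
  ring

theorem hirotaD_const_mul (c d : 𝕜) (hf : DifferentiableAt 𝕜 f x) (hg : DifferentiableAt 𝕜 g x) :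
    hirotaD (fun z => c * f z) (fun z => d * g z) x = c * d * hirotaD f g x := by
  rw [hirotaD, hirotaD, deriv_const_mul _ hf, deriv_const_mul _ hg]
  ring

theorem hirotaD2_gauge_mul (he₁ : ∀ z, HasDerivAt e₁ (l * e₁ z) z)
    (he₂ : ∀ z, HasDerivAt e₂ (l * e₂ z) z) (hf : ContDiff 𝕜 2 f) (hg : ContDiff 𝕜 2 g) :
    hirotaD2 (fun z => e₁ z * f z) (fun z => e₂ z * g z) x = e₁ x * e₂ x * hirotaD2 f g x := by
  rw [hirotaD2, hirotaD2, deriv_deriv_gauge_mul he₁ hf, deriv_deriv_gauge_mul he₂ hg,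
    deriv_gauge_mul he₁ (hf.differentiable two_ne_zero),
    deriv_gauge_mul he₂ (hg.differentiable two_ne_zero)]
  ring

theorem hirotaD3_gauge_mul (he₁ : ∀ z, HasDerivAt e₁ (l * e₁ z) z)
    (he₂ : ∀ z, HasDerivAt e₂ (l * e₂ z) z) (hf : ContDiff 𝕜 3 f) (hg : ContDiff 𝕜 3 g) :
    hirotaD3 (fun z => e₁ z * f z) (fun z => e₂ z * g z) x = e₁ x * e₂ x * hirotaD3 f g x := by
  rw [hirotaD3, hirotaD3, deriv_deriv_deriv_gauge_mul he₁ hf, deriv_deriv_deriv_gauge_mul he₂ hg,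
    deriv_deriv_gauge_mul he₁ (hf.of_le (by norm_num)),
    deriv_deriv_gauge_mul he₂ (hg.of_le (by norm_num)),
    deriv_gauge_mul he₁ (hf.differentiable three_ne_zero),
    deriv_gauge_mul he₂ (hg.differentiable three_ne_zero)]
  ring

theorem hirotaDxDy_gauge_mul_self {e F : 𝕜 → 𝕜 → 𝕜} {y : 𝕜}
    (hex : ∀ x y, HasDerivAt (fun x => e x y) (l * y * e x y) x)
    (hey : ∀ x y, HasDerivAt (e x) (l * x * e x y) y)
    (hFx : ∀ y', DifferentiableAt 𝕜 (fun x => F x y') x) (hFy : DifferentiableAt 𝕜 (F x) y)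
    (hFxy : DifferentiableAt 𝕜 (fun y' => deriv (fun x => F x y') x) y) :
    hirotaDxDy (fun x y => e x y * F x y) (fun x y => e x y * F x y) x y =
      e x y ^ 2 * (hirotaDxDy F F x y + 2 * l * F x y ^ 2) := by
  have hx (y' : 𝕜) : deriv (fun x => e x y' * F x y') x =
      l * y' * e x y' * F x y' + e x y' * deriv (fun x => F x y') x :=
    ((hex x y').fun_mul (hFx y').hasDerivAt).deriv
  have hy := ((hey x y).fun_mul hFy.hasDerivAt).deriv
  have hxy := (((((hasDerivAt_id y).const_mul l).fun_mul (hey x y)).fun_mul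
    hFy.hasDerivAt).fun_add ((hey x y).fun_mul hFxy.hasDerivAt)).deriv
  simp only [id] at hxy
  simp only [hirotaDxDy, hx, hy, hxy]
  ring

end Gauge

section MatrixCalculus

variable {𝕜 n : Type*} [NontriviallyNormedField 𝕜]
  {R S : 𝕜 → Matrix n n 𝕜} {R' S' : Matrix n n 𝕜} {x : 𝕜}

theorem hasDerivAt_matrix_iff [Finite n] :
    HasDerivAt R R' x ↔ ∀ i j, HasDerivAt (fun z => R z i j) (R' i j) x := by
  have := Fintype.ofFinite n
  exact hasDerivAt_pi.trans (forall_congr' fun _ => hasDerivAt_pi)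

variable [Fintype n]

theorem hasDerivAt_matrix_trace (hR : HasDerivAt R R' x) :
    HasDerivAt (fun z => (R z).trace) R'.trace x :=
  HasDerivAt.fun_sum fun i _ => hasDerivAt_matrix_iff.mp hR i i

variable [DecidableEq n]

theorem hasDerivAt_matrix_det (hR : HasDerivAt R R' x) :
    HasDerivAt (fun z => (R z).det) ((R x).adjugate * R').trace x := by
  have hcramer : ((R x).adjugate * R').trace = ∑ j, ((R x).updateCol j (R'.col j)).det :=
    Finset.sum_congr rfl fun j _ => by
      rw [← cramer_apply, cramer_eq_adjugate_mulVec]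
      rfl
  rw [hcramer]
  simp only [det_apply']
  rw [Finset.sum_comm]
  refine HasDerivAt.fun_sum fun σ _ => ?_
  rw [← Finset.mul_sum]
  have hprod := HasDerivAt.fun_finsetProd (u := Finset.univ)
    fun i _ => hasDerivAt_matrix_iff.mp hR (σ i) i
  refine (hprod.congr_deriv (Finset.sum_congr rfl fun j _ => ?_)).const_mul _
  rw [← Finset.mul_prod_erase Finset.univ _ (Finset.mem_univ j), mul_comm, smul_eq_mul,
    updateCol_self, col_apply]
  congr 1
  exact Finset.prod_congr rfl fun i hi => (updateCol_ne (Finset.ne_of_mem_erase hi)).symm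

theorem hasDerivAt_matrix_det_of_det_ne_zero (hR : HasDerivAt R R' x) (hdet : (R x).det ≠ 0) :
    HasDerivAt (fun z => (R z).det) ((R x).det * ((R x)⁻¹ * R').trace) x := by
  refine (hasDerivAt_matrix_det hR).congr_deriv ?_
  rw [inv_def, Ring.inverse_eq_inv', smul_mul, trace_smul, smul_eq_mul, mul_inv_cancel_left₀ hdet]

variable [CompleteSpace 𝕜]

theorem hasDerivAt_matrix_inv (hR : HasDerivAt R R' x) (hdet : (R x).det ≠ 0) :
    HasDerivAt (fun z => (R z)⁻¹) (-((R x)⁻¹ * R' * (R x)⁻¹)) x := by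
  have hcomplete : CompleteSpace (Matrix n n 𝕜) := inferInstance
  have := @instHasSummableGeomSeriesOfCompleteSpace (Matrix n n 𝕜) _ hcomplete
  obtain ⟨u, hu⟩ := (isUnit_iff_isUnit_det (R x)).mpr hdet.isUnit
  have hinv := hasFDerivAt_ringInverse (𝕜 := 𝕜) u
  rw [hu] at hinv
  simp only [nonsing_inv_eq_ringInverse]
  refine (hinv.comp_hasDerivAt x hR).congr_deriv ?_
  simp [← hu, mul_assoc]

theorem hasDerivAt_matrix_inv_mul (hR : HasDerivAt R R' x) (hS : HasDerivAt S S' x)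
    (hdet : (R x).det ≠ 0) :
    HasDerivAt (fun z => (R z)⁻¹ * S z) ((R x)⁻¹ * S' - (R x)⁻¹ * R' * ((R x)⁻¹ * S x)) x := by
  refine ((hasDerivAt_matrix_inv hR hdet).mul hS).congr_deriv ?_
  noncomm_ring

end MatrixCalculus

section RankOne

variable {R n : Type*} [CommRing R] [Fintype n] {u v : n → R} {C C' : Matrix n n R}

theorem trace_vecMulVec_mul_self (u v : n → R) :
    (vecMulVec u v * vecMulVec u v).trace = (vecMulVec u v).trace ^ 2 := by
  rw [vecMulVec_mul_vecMulVec, vecMulVec_smul, trace_smul, trace_vecMulVec, smul_eq_mul,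
    dotProduct_comm v u, sq]

theorem trace_vecMulVec_mul_self_mul_self (u v : n → R) :
    (vecMulVec u v * vecMulVec u v * vecMulVec u v).trace = (vecMulVec u v).trace ^ 3 := by
  rw [vecMulVec_mul_vecMulVec, vecMulVec_smul, smul_mul, trace_smul, trace_vecMulVec_mul_self,
    trace_vecMulVec, smul_eq_mul, dotProduct_comm v u]
  ring

theorem det_one_add_mul_vecMulVec [DecidableEq n] (X : Matrix n n R) (u v : n → R) :
    (1 + X * vecMulVec u v).det = 1 + (X * vecMulVec u v).trace := by
  rw [mul_vecMulVec, trace_vecMulVec, dotProduct_comm, vecMulVec_eq Unit,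
    det_one_add_replicateCol_mul_replicateRow]

theorem trace_sq_of_sub_eq_vecMulVec (hC : C' - C = vecMulVec u v) :
    (C * C).trace + (C' * C').trace - 2 * (C * C').trace = (C.trace - C'.trace) ^ 2 := by
  have hsq := trace_vecMulVec_mul_self u v
  simp only [← hC, sub_mul, mul_sub, trace_sub, trace_mul_comm C' C] at hsq
  linear_combination hsq

theorem trace_cube_of_sub_eq_vecMulVec (hC : C' - C = vecMulVec u v) :
    (C * C * C).trace - 3 * (C * C' * C).trace + 3 * (C' * C * C').trace - (C' * C' * C').trace =
      (C.trace - C'.trace) ^ 3 := by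
  have hcube := trace_vecMulVec_mul_self_mul_self u v
  have hcyc : (C * C * C').trace = (C * C' * C).trace := by rw [trace_mul_cycle, trace_mul_cycle]
  have hcyc' : (C' * C' * C).trace = (C' * C * C').trace := by
    rw [trace_mul_cycle, trace_mul_cycle]
  simp only [← hC, sub_mul, mul_sub, trace_sub, trace_mul_cycle C' C C, trace_mul_cycle C C' C',
    hcyc, hcyc'] at hcube
  linear_combination -hcube

theorem trace_third_order_of_sub_eq_vecMulVec (hC : C' - C = vecMulVec u v) :
    -2 * (C * (C * C' - C * C)).trace + 2 * (C' * (C' * C - C' * C')).trace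
        + 3 * (C.trace - C'.trace) * (2 * (C * C').trace - (C * C).trace - (C' * C').trace)
        + (C.trace - C'.trace) ^ 3 =
      4 * (C * C' * C).trace - 4 * (C' * C * C').trace := by
  have hsq := trace_sq_of_sub_eq_vecMulVec hC
  have hcube := trace_cube_of_sub_eq_vecMulVec hC
  have hcyc : (C * (C * C')).trace = (C * C' * C).trace := trace_mul_comm _ _
  have hcyc' : (C' * (C' * C)).trace = (C' * C * C').trace := trace_mul_comm _ _
  simp only [mul_sub, trace_sub, hcyc, hcyc', ← mul_assoc C C C, ← mul_assoc C' C' C']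
  linear_combination 2 * hcube - 3 * (C.trace - C'.trace) * hsq

end RankOne

section InvMul

variable {𝕜 n : Type*} [Field 𝕜] [Fintype n] [DecidableEq n] {P R S : Matrix n n 𝕜}

theorem inv_mul_mul_inv_mul (A B : Matrix n n 𝕜) (hdet : S.det ≠ 0) :
    A⁻¹ * S * (S⁻¹ * B) = A⁻¹ * B := by
  rw [mul_assoc, mul_nonsing_inv_cancel_left _ _ hdet.isUnit]

theorem mul_mul_inv_mul (A Q B : Matrix n n 𝕜) (hdet : S.det ≠ 0) :
    A * (Q * S) * (S⁻¹ * B) = A * (Q * B) := by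
  rw [mul_assoc, mul_assoc, mul_nonsing_inv_cancel_left _ _ hdet.isUnit]

theorem trace_inv_mul_mul (Q : Matrix n n 𝕜) (hdet : R.det ≠ 0) :
    (R⁻¹ * (Q * R)).trace = Q.trace := by
  rw [trace_mul_comm, mul_nonsing_inv_cancel_right _ _ hdet.isUnit]

theorem trace_one_sub_inv_mul_mul {u v : n → 𝕜} (hdetP : P.det ≠ 0) (hdetR : R.det ≠ 0)
    (hrank : R⁻¹ * S - P⁻¹ * R = vecMulVec u v) :
    (1 - R⁻¹ * P * (R⁻¹ * S)).trace = 1 - P.det * S.det / R.det ^ 2 := by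
  have hinv : R⁻¹ * P * (P⁻¹ * R) = 1 := by
    rw [inv_mul_mul_inv_mul _ _ hdetP, nonsing_inv_mul _ hdetR.isUnit]
  have hupdate : R⁻¹ * P * vecMulVec u v = R⁻¹ * P * (R⁻¹ * S) - 1 := by
    rw [← hrank, mul_sub, hinv]
  have hdet := det_one_add_mul_vecMulVec (R⁻¹ * P) u v
  rw [hupdate, add_sub_cancel, trace_sub, det_mul, det_mul, det_mul, det_nonsing_inv,
    Ring.inverse_eq_inv'] at hdet
  rw [trace_sub]
  linear_combination hdet

end InvMul

section SecondOrderSystem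

variable {𝕜 n : Type*} [NontriviallyNormedField 𝕜] [Fintype n] [DecidableEq n]
  {R S : 𝕜 → Matrix n n 𝕜} {Q : Matrix n n 𝕜} {x : 𝕜}

theorem hirotaD_det {R' S' : Matrix n n 𝕜} (hR : HasDerivAt R R' x) (hS : HasDerivAt S S' x)
    (hdetR : (R x).det ≠ 0) (hdetS : (S x).det ≠ 0) :
    hirotaD (fun z => (R z).det) (fun z => (S z).det) x =
      (R x).det * (S x).det * (((R x)⁻¹ * R').trace - ((S x)⁻¹ * S').trace) := by
  rw [hirotaD, (hasDerivAt_matrix_det_of_det_ne_zero hR hdetR).deriv,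
    (hasDerivAt_matrix_det_of_det_ne_zero hS hdetS).deriv]
  ring

theorem eventually_det_ne_zero {R' : Matrix n n 𝕜} (hR : HasDerivAt R R' x)
    (hdet : (R x).det ≠ 0) : ∀ᶠ z in 𝓝 x, (R z).det ≠ 0 :=
  (hasDerivAt_matrix_det hR).continuousAt.eventually_ne hdet

theorem eventually_hasDerivAt_det (hR : ∀ z, HasDerivAt R (S z) z) (hdet : (R x).det ≠ 0) :
    ∀ᶠ z in 𝓝 x, HasDerivAt (fun z => (R z).det) ((R z).det * ((R z)⁻¹ * S z).trace) z :=
  (eventually_det_ne_zero (hR x) hdet).mono fun z => hasDerivAt_matrix_det_of_det_ne_zero (hR z)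

variable [CompleteSpace 𝕜]

theorem hasDerivAt_trace_inv_mul (hR : HasDerivAt R (S x) x) (hS : HasDerivAt S (Q * R x) x)
    (hdet : (R x).det ≠ 0) :
    HasDerivAt (fun z => ((R z)⁻¹ * S z).trace)
      (Q.trace - ((R x)⁻¹ * S x * ((R x)⁻¹ * S x)).trace) x := by
  refine (hasDerivAt_matrix_trace (hasDerivAt_matrix_inv_mul hR hS hdet)).congr_deriv ?_
  rw [trace_sub, trace_mul_comm, mul_assoc, mul_nonsing_inv _ hdet.isUnit, mul_one]

theorem hasDerivAt_trace_inv_mul_sq (hR : HasDerivAt R (S x) x)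
    (hS : HasDerivAt S (Q * R x) x) (hdet : (R x).det ≠ 0) :
    HasDerivAt (fun z => Q.trace - ((R z)⁻¹ * S z * ((R z)⁻¹ * S z)).trace)
      (-2 * ((R x)⁻¹ * S x *
        ((R x)⁻¹ * (Q * R x) - (R x)⁻¹ * S x * ((R x)⁻¹ * S x))).trace) x := by
  have hC := hasDerivAt_matrix_inv_mul hR hS hdet
  refine ((hasDerivAt_matrix_trace (hC.mul hC)).const_sub Q.trace).congr_deriv ?_
  rw [trace_add, trace_mul_comm (_ - _)]
  ring

theorem hirotaD2_det_eq_zero {u v : n → 𝕜} (hR : ∀ z, HasDerivAt R (S z) z)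
    (hS : ∀ z, HasDerivAt S (Q * R z) z) (hdetR : (R x).det ≠ 0) (hdetS : (S x).det ≠ 0)
    (hrank : (S x)⁻¹ * (Q * R x) - (R x)⁻¹ * S x = vecMulVec u v) :
    hirotaD2 (fun z => (R z).det) (fun z => (S z).det) x = 0 := by
  have hQR (z : 𝕜) : HasDerivAt (fun z => Q * R z) (Q * S z) z := (hR z).const_mul Q
  have htrace : Q.trace = ((R x)⁻¹ * S x * ((S x)⁻¹ * (Q * R x))).trace := by
    rw [inv_mul_mul_inv_mul _ _ hdetS, trace_inv_mul_mul Q hdetR]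
  rw [hirotaD2_of_hasDerivAt_mul (eventually_hasDerivAt_det hR hdetR)
    (hasDerivAt_trace_inv_mul (hR x) (hS x) hdetR) (eventually_hasDerivAt_det hS hdetS)
    (hasDerivAt_trace_inv_mul (hS x) (hQR x) hdetS), htrace,
    ← trace_sq_of_sub_eq_vecMulVec hrank]
  ring

theorem hirotaD3_det {u v : n → 𝕜} (hR : ∀ z, HasDerivAt R (S z) z)
    (hS : ∀ z, HasDerivAt S (Q * R z) z) (hdetR : (R x).det ≠ 0) (hdetS : (S x).det ≠ 0)
    (hrank : (S x)⁻¹ * (Q * R x) - (R x)⁻¹ * S x = vecMulVec u v) :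
    hirotaD3 (fun z => (R z).det) (fun z => (S z).det) x = (R x).det * (S x).det *
      (4 * ((R x)⁻¹ * (Q * S x)).trace - 4 * ((S x)⁻¹ * (Q * (Q * R x))).trace) := by
  have hQR (z : 𝕜) : HasDerivAt (fun z => Q * R z) (Q * S z) z := (hR z).const_mul Q
  rw [hirotaD3_of_hasDerivAt_mul (eventually_hasDerivAt_det hR hdetR)
    ((eventually_det_ne_zero (hR x) hdetR).mono fun z => hasDerivAt_trace_inv_mul (hR z) (hS z))
    (hasDerivAt_trace_inv_mul_sq (hR x) (hS x) hdetR) (eventually_hasDerivAt_det hS hdetS)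
    ((eventually_det_ne_zero (hS x) hdetS).mono fun z => hasDerivAt_trace_inv_mul (hS z) (hQR z))
    (hasDerivAt_trace_inv_mul_sq (hS x) (hQR x) hdetS)]
  have hCC' := inv_mul_mul_inv_mul (R x) (Q * R x) hdetS
  have hC'C := mul_mul_inv_mul (S x)⁻¹ Q (S x) hdetR
  have hCC'C := mul_mul_inv_mul (R x)⁻¹ Q (S x) hdetR
  have hC'CC' := mul_mul_inv_mul (S x)⁻¹ Q (Q * R x) hdetS
  rw [← hC'C] at hC'CC'
  rw [← hCC'] at hCC'C
  rw [← trace_inv_mul_mul Q hdetR, ← hC'CC', ← hCC'C, ← hCC', ← hC'C,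
    ← trace_third_order_of_sub_eq_vecMulVec hrank]
  ring

end SecondOrderSystem

section Toda

variable {𝕜 n : Type*} [NontriviallyNormedField 𝕜] [CompleteSpace 𝕜] [Fintype n] [DecidableEq n]
  {R : 𝕜 → 𝕜 → Matrix n n 𝕜} {S : 𝕜 → Matrix n n 𝕜} {P : Matrix n n 𝕜} {x y : 𝕜} {u v : n → 𝕜}

theorem hirotaDxDy_det_self
    (hx : ∀ y', HasDerivAt (fun x' => R x' y') (S y') x) (hRy : HasDerivAt (R x) P y)
    (hSy : HasDerivAt S (R x y) y) (hdetP : P.det ≠ 0) (hdetR : (R x y).det ≠ 0)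
    (hrank : (R x y)⁻¹ * S y - P⁻¹ * R x y = vecMulVec u v) :
    hirotaDxDy (fun x' y' => (R x' y').det) (fun x' y' => (R x' y').det) x y =
      2 * (R x y).det ^ 2 - 2 * P.det * (S y).det := by
  have hlog : ∀ᶠ y' in 𝓝 y, deriv (fun x' => (R x' y').det) x =
      (R x y').det * ((R x y')⁻¹ * S y').trace :=
    (eventually_det_ne_zero hRy hdetR).mono fun y' hdet =>
      (hasDerivAt_matrix_det_of_det_ne_zero (hx y') hdet).deriv
  have htrace := hasDerivAt_matrix_trace (hasDerivAt_matrix_inv_mul hRy hSy hdetR)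
  rw [hirotaDxDy_self_of_deriv_eq_mul hlog (hasDerivAt_matrix_det hRy).differentiableAt htrace,
    nonsing_inv_mul _ hdetR.isUnit, trace_one_sub_inv_mul_mul hdetP hdetR hrank]
  field_simp

end Toda

section ColumnShift

variable {R : Type*} [CommRing R] {N : ℕ} {A B A' B' : Matrix (Fin N) (Fin N) R}

/-- The columns of `B`, except for the last, are the columns of `A` moved one step to the left.
If `A` is invertible, this makes `A⁻¹ * B` a companion matrix. -/
def IsColumnShift (A B : Matrix (Fin N) (Fin N) R) : Prop :=
  ∀ i j (hj : j.val + 1 < N), B i j = A i ⟨j.val + 1, hj⟩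

theorem IsColumnShift.inv_mul_apply (h : IsColumnShift A B) (hdet : IsUnit A.det) (i j : Fin N)
    (hj : j.val + 1 < N) :
    (A⁻¹ * B) i j = (1 : Matrix (Fin N) (Fin N) R) i ⟨j.val + 1, hj⟩ := by
  rw [← nonsing_inv_mul A hdet, mul_apply, mul_apply]
  exact Finset.sum_congr rfl fun l _ => by rw [h l j hj]

theorem IsColumnShift.exists_inv_mul_sub_inv_mul_eq_vecMulVec (h : IsColumnShift A B)
    (h' : IsColumnShift A' B') (hdet : IsUnit A.det) (hdet' : IsUnit A'.det) :
    ∃ u v, A'⁻¹ * B' - A⁻¹ * B = vecMulVec u v := by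
  cases N with
  | zero => exact ⟨0, 0, Subsingleton.elim _ _⟩
  | succ N =>
    refine ⟨fun i => (A'⁻¹ * B' - A⁻¹ * B) i (Fin.last N), Pi.single (Fin.last N) 1, ?_⟩
    ext i j
    rw [vecMulVec_apply]
    rcases eq_or_ne j (Fin.last N) with rfl | hj
    · rw [Pi.single_eq_same, mul_one]
    · have hlt : j.val + 1 < N + 1 := Nat.succ_lt_succ (Fin.val_lt_last hj)
      rw [Pi.single_eq_of_ne hj, mul_zero, Matrix.sub_apply, h.inv_mul_apply hdet i j hlt,
        h'.inv_mul_apply hdet' i j hlt, sub_self]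

end ColumnShift

section Casorati

/-- The function `f_n = a pⁿ e^η + b (-p)ⁿ e^{-η}` from which the Casorati determinants are built,
as a function of the phase `η`. -/
noncomputable def seed (a b p : ℝ) (n : ℤ) (η : ℝ) : ℝ :=
  a * p ^ n * Real.exp η + b * (-p) ^ n * Real.exp (-η)

/-- The phase `η = p x + 4 p³ t + y / p` of the soliton with wave number `p`. -/
noncomputable def phase (p x t y : ℝ) : ℝ :=
  p * x + 4 * p ^ 3 * t + y / p

theorem hasDerivAt_seed {a b p c s : ℝ} {η : ℝ → ℝ} {j : ℤ} (hp : p ≠ 0) (hj : Odd j) (n : ℤ)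
    (hη : HasDerivAt η (c * p ^ j) s) :
    HasDerivAt (fun s => seed a b p n (η s)) (c * seed a b p (n + j) (η s)) s := by
  refine ((hη.exp.const_mul (a * p ^ n)).add
    (hη.fun_neg.exp.const_mul (b * (-p) ^ n))).congr_deriv ?_
  rw [seed, zpow_add₀ hp, zpow_add₀ (neg_ne_zero.mpr hp), hj.neg_zpow]
  ring

theorem seed_add_two {p : ℝ} (hp : p ≠ 0) (a b : ℝ) (n : ℤ) (η : ℝ) :
    seed a b p (n + 2) η = p ^ 2 * seed a b p n η := by
  rw [seed, seed, zpow_add₀ hp, zpow_add₀ (neg_ne_zero.mpr hp), even_two.neg_zpow, zpow_ofNat]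
  ring

variable {N : ℕ} {α β p : Fin N → ℝ}

/-- The matrix `(f^{(i)}_{m+j})`, with the column index `j` starting from `0`. -/
noncomputable def casoratiMatrix (α β p : Fin N → ℝ) (m : ℤ) (x t y : ℝ) :
    Matrix (Fin N) (Fin N) ℝ :=
  of fun i j => seed (α i) (β i) (p i) (m + j.val) (phase (p i) x t y)

/-- The Casorati determinant `ρ_N(m)`. -/
noncomputable def casoratian (α β p : Fin N → ℝ) (m : ℤ) (x t y : ℝ) : ℝ :=
  (casoratiMatrix α β p m x t y).det

theorem isColumnShift_casoratiMatrix (α β p : Fin N → ℝ) (m : ℤ) (x t y : ℝ) :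
    IsColumnShift (casoratiMatrix α β p m x t y) (casoratiMatrix α β p (m + 1) x t y) := by
  intro i j hj
  simp only [casoratiMatrix, of_apply]
  push_cast
  rw [add_assoc, add_comm 1 (j.val : ℤ)]

theorem casoratiMatrix_add_two (hp : ∀ i, p i ≠ 0) (m : ℤ) (x t y : ℝ) :
    casoratiMatrix α β p (m + 2) x t y =
      diagonal (fun i => p i ^ 2) * casoratiMatrix α β p m x t y := by
  ext i j
  rw [diagonal_mul, casoratiMatrix, casoratiMatrix, of_apply, of_apply, add_right_comm,
    seed_add_two (hp i)]

theorem casoratian_add_two (hp : ∀ i, p i ≠ 0) (m : ℤ) (x t y : ℝ) :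
    casoratian α β p (m + 2) x t y = (∏ i, p i ^ 2) * casoratian α β p m x t y := by
  rw [casoratian, casoratiMatrix_add_two hp, det_mul, det_diagonal, casoratian]

theorem hasDerivAt_casoratiMatrix_x (hp : ∀ i, p i ≠ 0) (m : ℤ) (x t y : ℝ) :
    HasDerivAt (fun x => casoratiMatrix α β p m x t y) (casoratiMatrix α β p (m + 1) x t y) x := by
  refine hasDerivAt_matrix_iff.mpr fun i j => ?_
  have hphase : HasDerivAt (fun x => phase (p i) x t y) (1 * p i ^ (1 : ℤ)) x :=
    ((((hasDerivAt_id x).const_mul (p i)).add_const _).add_const _).congr_deriv (by simp)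
  refine (hasDerivAt_seed (hp i) odd_one (m + j.val) hphase).congr_deriv ?_
  rw [one_mul, add_right_comm, casoratiMatrix, of_apply]

theorem hasDerivAt_casoratiMatrix_t (hp : ∀ i, p i ≠ 0) (m : ℤ) (x t y : ℝ) :
    HasDerivAt (fun t => casoratiMatrix α β p m x t y)
      ((4 : ℝ) • casoratiMatrix α β p (m + 3) x t y) t := by
  refine hasDerivAt_matrix_iff.mpr fun i j => ?_
  have hphase : HasDerivAt (fun t => phase (p i) x t y) (4 * p i ^ (3 : ℤ)) t :=
    ((((hasDerivAt_id t).const_mul (4 * p i ^ 3)).const_add _).add_const _).congr_deriv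
      (by simp [zpow_ofNat])
  refine (hasDerivAt_seed (hp i) (by decide) (m + j.val) hphase).congr_deriv ?_
  rw [add_right_comm, casoratiMatrix, Matrix.smul_apply, of_apply, smul_eq_mul]

theorem hasDerivAt_casoratiMatrix_y (hp : ∀ i, p i ≠ 0) (m : ℤ) (x t y : ℝ) :
    HasDerivAt (fun y => casoratiMatrix α β p m x t y) (casoratiMatrix α β p (m - 1) x t y) y := by
  refine hasDerivAt_matrix_iff.mpr fun i j => ?_
  have hphase : HasDerivAt (fun y => phase (p i) x t y) (1 * p i ^ (-1 : ℤ)) y :=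
    (((hasDerivAt_id y).div_const (p i)).const_add _).congr_deriv (by simp)
  refine (hasDerivAt_seed (hp i) (by decide) (m + j.val) hphase).congr_deriv ?_
  rw [one_mul, add_right_comm, casoratiMatrix, of_apply, sub_eq_add_neg]

end Casorati

section GenericBilinear

variable {N : ℕ} {α β p : Fin N → ℝ} {m : ℤ} {x t y : ℝ}

theorem exists_casoratiMatrix_inv_mul_sub_eq_vecMulVec (hm : casoratian α β p m x t y ≠ 0)
    (hm' : casoratian α β p (m + 1) x t y ≠ 0) :
    ∃ u v, (casoratiMatrix α β p (m + 1) x t y)⁻¹ * casoratiMatrix α β p (m + 1 + 1) x t y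
      - (casoratiMatrix α β p m x t y)⁻¹ * casoratiMatrix α β p (m + 1) x t y = vecMulVec u v :=
  (isColumnShift_casoratiMatrix α β p m x t y).exists_inv_mul_sub_inv_mul_eq_vecMulVec
    (isColumnShift_casoratiMatrix α β p (m + 1) x t y) hm.isUnit hm'.isUnit

theorem hirotaDxDy_casoratian_of_ne_zero (hp : ∀ i, p i ≠ 0)
    (hm : casoratian α β p m x t y ≠ 0) (hm' : casoratian α β p (m + 1) x t y ≠ 0) :
    hirotaDxDy (fun x y => casoratian α β p (m + 1) x t y)
        (fun x y => casoratian α β p (m + 1) x t y) x y =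
      2 * casoratian α β p (m + 1) x t y ^ 2
        - 2 * casoratian α β p m x t y * casoratian α β p (m + 1 + 1) x t y := by
  obtain ⟨u, v, hrank⟩ := exists_casoratiMatrix_inv_mul_sub_eq_vecMulVec hm hm'
  have hRy := hasDerivAt_casoratiMatrix_y (α := α) (β := β) hp (m + 1) x t y
  have hSy := hasDerivAt_casoratiMatrix_y (α := α) (β := β) hp (m + 1 + 1) x t y
  rw [add_sub_cancel_right] at hRy hSy
  exact hirotaDxDy_det_self (fun y' => hasDerivAt_casoratiMatrix_x hp (m + 1) x t y') hRy hSy hm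
    hm' hrank

theorem hirotaD2_casoratian_of_ne_zero (hp : ∀ i, p i ≠ 0)
    (hm : casoratian α β p m x t y ≠ 0) (hm' : casoratian α β p (m + 1) x t y ≠ 0) :
    hirotaD2 (fun x => casoratian α β p m x t y)
      (fun x => casoratian α β p (m + 1) x t y) x = 0 := by
  obtain ⟨u, v, hrank⟩ := exists_casoratiMatrix_inv_mul_sub_eq_vecMulVec hm hm'
  have hx := hasDerivAt_casoratiMatrix_x (α := α) (β := β) hp (t := t) (y := y)
  have hx' := hx (m + 1)
  simp only [add_assoc m, one_add_one_eq_two, casoratiMatrix_add_two hp] at hx' hrank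
  exact hirotaD2_det_eq_zero (hx m) hx' hm hm' hrank

theorem hirotaD3_sub_hirotaD_casoratian_of_ne_zero (hp : ∀ i, p i ≠ 0)
    (hm : casoratian α β p m x t y ≠ 0) (hm' : casoratian α β p (m + 1) x t y ≠ 0) :
    hirotaD3 (fun x => casoratian α β p m x t y) (fun x => casoratian α β p (m + 1) x t y) x
      - hirotaD (fun t => casoratian α β p m x t y)
        (fun t => casoratian α β p (m + 1) x t y) t = 0 := by
  obtain ⟨u, v, hrank⟩ := exists_casoratiMatrix_inv_mul_sub_eq_vecMulVec hm hm'
  have hx := hasDerivAt_casoratiMatrix_x (α := α) (β := β) hp (t := t) (y := y)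
  have hx' := hx (m + 1)
  simp only [add_assoc m, one_add_one_eq_two, casoratiMatrix_add_two hp] at hx' hrank
  have ht := hirotaD_det (hasDerivAt_casoratiMatrix_t (α := α) (β := β) hp m x t y)
    (hasDerivAt_casoratiMatrix_t hp (m + 1) x t y) hm hm'
  have hshift (l : ℤ) : casoratiMatrix α β p (l + 3) x t y =
      diagonal (fun i => p i ^ 2) * casoratiMatrix α β p (l + 1) x t y := by
    rw [← casoratiMatrix_add_two hp, add_assoc]
    norm_num
  have hD3 := hirotaD3_det (hx m) hx' hm hm' hrank
  rw [hshift, hshift, add_assoc m, one_add_one_eq_two, casoratiMatrix_add_two hp] at ht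
  simp only [Matrix.mul_smul, trace_smul, smul_eq_mul] at ht
  exact sub_eq_zero.mpr (hD3.trans ht.symm)

end GenericBilinear

section Genericity

variable {V : Type*} [NormedAddCommGroup V] [NormedSpace ℝ V]

theorem dense_ne_zero_of_contDiff_omega {f : V → ℝ} (hf : ContDiff ℝ ω f) (hne : ∃ v, f v ≠ 0) :
    Dense {v | f v ≠ 0} := by
  have hf' : AnalyticOnNhd ℝ f Set.univ := contDiff_omega_iff_analyticOnNhd.mp hf
  obtain ⟨v, hv⟩ := hne
  refine fun w => mem_closure_iff_frequently.mpr fun hw => hv ?_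
  have hzero : f =ᶠ[𝓝 w] 0 := hw.mono fun z hz => not_not.mp hz
  exact hf'.eqOn_zero_of_preconnected_of_eventuallyEq_zero isPreconnected_univ (Set.mem_univ w)
    hzero (Set.mem_univ v)

theorem eq_zero_of_forall_ne_zero_of_contDiff_omega {f g L : V → ℝ} (hf : ContDiff ℝ ω f)
    (hg : ContDiff ℝ ω g) (hf₀ : ∃ v, f v ≠ 0) (hg₀ : ∃ v, g v ≠ 0) (hL : Continuous L)
    (hzero : ∀ v, f v ≠ 0 → g v ≠ 0 → L v = 0) (v : V) : L v = 0 := by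
  have hdense : Dense ({v | f v ≠ 0} ∩ {v | g v ≠ 0}) :=
    (dense_ne_zero_of_contDiff_omega hf hf₀).inter_of_isOpen_left
      (dense_ne_zero_of_contDiff_omega hg hg₀) (isOpen_ne_fun hf.continuous continuous_const)
  exact congrFun (hL.ext_on hdense continuous_const fun v hv => hzero v hv.1 hv.2) v

end Genericity

section ParametricDerivatives

variable {V : Type*} [NormedAddCommGroup V] [NormedSpace ℝ V] {G H : V → ℝ → ℝ}

theorem contDiff_omega_deriv (hG : ContDiff ℝ ω ↿G) : ContDiff ℝ ω ↿fun v => deriv (G v) := by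
  have hG' : ContDiff ℝ ω (uncurry fun q : V × ℝ => G q.1) :=
    hG.comp (f := fun q : (V × ℝ) × ℝ => (q.1.1, q.2)) (by fun_prop)
  exact ContDiff.fderiv_apply hG' contDiff_snd contDiff_const le_rfl

theorem continuous_of_contDiff_omega (hG : ContDiff ℝ ω ↿G) (x : ℝ) : Continuous fun v => G v x :=
  hG.continuous.comp (by fun_prop : Continuous fun v : V => (v, x))

theorem continuous_hirotaD (hG : ContDiff ℝ ω ↿G) (hH : ContDiff ℝ ω ↿H) (x : ℝ) :
    Continuous fun v => hirotaD (G v) (H v) x := by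
  have hG₀ := continuous_of_contDiff_omega hG x
  have hH₀ := continuous_of_contDiff_omega hH x
  have hG₁ := continuous_of_contDiff_omega (contDiff_omega_deriv hG) x
  have hH₁ := continuous_of_contDiff_omega (contDiff_omega_deriv hH) x
  unfold hirotaD
  fun_prop

theorem continuous_hirotaD2 (hG : ContDiff ℝ ω ↿G) (hH : ContDiff ℝ ω ↿H) (x : ℝ) :
    Continuous fun v => hirotaD2 (G v) (H v) x := by
  have hG' := contDiff_omega_deriv hG
  have hH' := contDiff_omega_deriv hH
  have hG₀ := continuous_of_contDiff_omega hG x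
  have hH₀ := continuous_of_contDiff_omega hH x
  have hG₁ := continuous_of_contDiff_omega hG' x
  have hH₁ := continuous_of_contDiff_omega hH' x
  have hG₂ := continuous_of_contDiff_omega (contDiff_omega_deriv hG') x
  have hH₂ := continuous_of_contDiff_omega (contDiff_omega_deriv hH') x
  unfold hirotaD2
  fun_prop

theorem continuous_hirotaD3 (hG : ContDiff ℝ ω ↿G) (hH : ContDiff ℝ ω ↿H) (x : ℝ) :
    Continuous fun v => hirotaD3 (G v) (H v) x := by
  have hG' := contDiff_omega_deriv hG
  have hH' := contDiff_omega_deriv hH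
  have hG'' := contDiff_omega_deriv hG'
  have hH'' := contDiff_omega_deriv hH'
  have hG₀ := continuous_of_contDiff_omega hG x
  have hH₀ := continuous_of_contDiff_omega hH x
  have hG₁ := continuous_of_contDiff_omega hG' x
  have hH₁ := continuous_of_contDiff_omega hH' x
  have hG₂ := continuous_of_contDiff_omega hG'' x
  have hH₂ := continuous_of_contDiff_omega hH'' x
  have hG₃ := continuous_of_contDiff_omega (contDiff_omega_deriv hG'') x
  have hH₃ := continuous_of_contDiff_omega (contDiff_omega_deriv hH'') x
  unfold hirotaD3
  fun_prop

theorem continuous_hirotaDxDy {F G : V → ℝ → ℝ → ℝ} (hF : ContDiff ℝ ω ↿F)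
    (hG : ContDiff ℝ ω ↿G) (x y : ℝ) : Continuous fun v => hirotaDxDy (F v) (G v) x y := by
  have hy {F : V → ℝ → ℝ → ℝ} (hF : ContDiff ℝ ω ↿F) : ContDiff ℝ ω ↿fun v => F v x :=
    hF.comp (f := fun q : V × ℝ => (q.1, x, q.2)) (by fun_prop)
  have hxy {F : V → ℝ → ℝ → ℝ} (hF : ContDiff ℝ ω ↿F) :
      ContDiff ℝ ω ↿fun v y => deriv (fun x => F v x y) x := by
    have hswap : ContDiff ℝ ω ↿fun (q : V × ℝ) x => F q.1 x q.2 :=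
      hF.comp (f := fun q : (V × ℝ) × ℝ => (q.1.1, q.2, q.1.2)) (by fun_prop)
    exact (contDiff_omega_deriv hswap).comp (f := fun q : V × ℝ => (q, x)) (by fun_prop)
  have hF₀ := continuous_of_contDiff_omega (hy hF) y
  have hG₀ := continuous_of_contDiff_omega (hy hG) y
  have hFx := continuous_of_contDiff_omega (hxy hF) y
  have hGx := continuous_of_contDiff_omega (hxy hG) y
  have hFy := continuous_of_contDiff_omega (contDiff_omega_deriv (hy hF)) y
  have hGy := continuous_of_contDiff_omega (contDiff_omega_deriv (hy hG)) y
  have hFxy := continuous_of_contDiff_omega (contDiff_omega_deriv (hxy hF)) y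
  have hGxy := continuous_of_contDiff_omega (contDiff_omega_deriv (hxy hG)) y
  unfold hirotaDxDy
  fun_prop

end ParametricDerivatives

section Deformation

theorem mul_exp_zpow (p u : ℝ) (n : ℤ) :
    (p * Real.exp u) ^ n = p ^ n * Real.exp (n * u) := by
  rw [mul_zpow, mul_comm (n : ℝ), Real.exp_mul, Real.rpow_intCast]

variable {N : ℕ} {α β p : Fin N → ℝ}

/-- The Casorati determinant with amplitudes `v.1`, `v.2.1` and wave numbers `p i * exp (v.2.2 i)`.
Unlike the wave numbers themselves, which must avoid `0`, these parameters range over a vector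
space, on which a nonzero analytic function is nonzero on a dense set. -/
noncomputable def deformedCasoratian (p : Fin N → ℝ) (m : ℤ)
    (v : (Fin N → ℝ) × (Fin N → ℝ) × (Fin N → ℝ)) (x t y : ℝ) : ℝ :=
  casoratian v.1 v.2.1 (fun i => p i * Real.exp (v.2.2 i)) m x t y

theorem deformedCasoratian_zero (α β p : Fin N → ℝ) (m : ℤ) :
    deformedCasoratian p m (α, β, 0) = casoratian α β p m := by
  funext x t y
  simp only [deformedCasoratian, Pi.zero_apply, Real.exp_zero, mul_one]

theorem contDiff_deformedCasoratian {E : Type*} [NormedAddCommGroup E] [NormedSpace ℝ E]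
    {v : E → (Fin N → ℝ) × (Fin N → ℝ) × (Fin N → ℝ)} {x t y : E → ℝ} (hv : ContDiff ℝ ω v)
    (hx : ContDiff ℝ ω x) (ht : ContDiff ℝ ω t) (hy : ContDiff ℝ ω y) (p : Fin N → ℝ) (m : ℤ) :
    ContDiff ℝ ω fun e => deformedCasoratian p m (v e) (x e) (t e) (y e) := by
  simp only [deformedCasoratian, casoratian, casoratiMatrix, det_apply', of_apply, seed, phase,
    ← neg_mul, mul_exp_zpow, div_eq_mul_inv, mul_inv, ← Real.exp_neg]
  fun_prop

theorem casoratiMatrix_one_zero (hp : ∀ i, p i ≠ 0) (m : ℤ) (x t y : ℝ) :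
    casoratiMatrix 1 0 p m x t y =
      of fun i j => p i ^ m * Real.exp (phase (p i) x t y) * vandermonde p i j := by
  ext i j
  simp only [casoratiMatrix, of_apply, seed, vandermonde_apply, Pi.one_apply, Pi.zero_apply,
    zpow_add₀ (hp i), zpow_natCast]
  ring

theorem casoratian_one_zero_ne_zero (hp : ∀ i, p i ≠ 0) (hinj : Injective p) (m : ℤ)
    (x t y : ℝ) : casoratian 1 0 p m x t y ≠ 0 := by
  rw [casoratian, casoratiMatrix_one_zero hp, det_mul_column]
  exact mul_ne_zero
    (Finset.prod_ne_zero_iff.mpr fun i _ =>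
      mul_ne_zero (zpow_ne_zero m (hp i)) (Real.exp_ne_zero _))
    (det_vandermonde_ne_zero_iff.mpr hinj)

theorem exists_injective_mul_exp (hp : ∀ i, p i ≠ 0) :
    ∃ u : Fin N → ℝ, Injective fun i => p i * Real.exp (u i) := by
  refine ⟨fun i => Real.log ((i.val + 1) / |p i|), fun i j hij => ?_⟩
  have habs (i : Fin N) : |p i * Real.exp (Real.log ((i.val + 1) / |p i|))| = i.val + 1 := by
    have hpi : 0 < |p i| := abs_pos.mpr (hp i)
    rw [Real.exp_log (by positivity), abs_mul, abs_div, abs_abs, mul_div_cancel₀ _ hpi.ne',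
      abs_of_pos i.val.cast_add_one_pos]
  have hval : (i.val + 1 : ℝ) = j.val + 1 := by
    rw [← habs i, ← habs j]
    exact congrArg abs hij
  exact Fin.ext (by exact_mod_cast add_right_cancel hval)

theorem exists_deformedCasoratian_ne_zero (hp : ∀ i, p i ≠ 0) (m : ℤ) (x t y : ℝ) :
    ∃ v, deformedCasoratian p m v x t y ≠ 0 := by
  obtain ⟨u, hu⟩ := exists_injective_mul_exp hp
  exact ⟨(1, 0, u), casoratian_one_zero_ne_zero
    (fun i => mul_ne_zero (hp i) (Real.exp_ne_zero _)) hu m x t y⟩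

theorem eq_zero_of_forall_deformedCasoratian_ne_zero (hp : ∀ i, p i ≠ 0) {m : ℤ} {x t y : ℝ}
    {L : (Fin N → ℝ) × (Fin N → ℝ) × (Fin N → ℝ) → ℝ} (hL : Continuous L)
    (hzero : ∀ v, deformedCasoratian p m v x t y ≠ 0 →
      deformedCasoratian p (m + 1) v x t y ≠ 0 → L v = 0) (v) : L v = 0 := by
  have hdef (l : ℤ) : ContDiff ℝ ω fun v => deformedCasoratian p l v x t y :=
    contDiff_deformedCasoratian contDiff_id contDiff_const contDiff_const contDiff_const p l
  exact eq_zero_of_forall_ne_zero_of_contDiff_omega (hdef m) (hdef (m + 1))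
    (exists_deformedCasoratian_ne_zero hp m x t y)
    (exists_deformedCasoratian_ne_zero hp (m + 1) x t y) hL hzero v

theorem contDiff_deformedCasoratian_x (p : Fin N → ℝ) (m : ℤ) (t y : ℝ) :
    ContDiff ℝ ω ↿fun v x => deformedCasoratian p m v x t y :=
  contDiff_deformedCasoratian contDiff_fst contDiff_snd contDiff_const contDiff_const p m

theorem contDiff_deformedCasoratian_t (p : Fin N → ℝ) (m : ℤ) (x y : ℝ) :
    ContDiff ℝ ω ↿fun v t => deformedCasoratian p m v x t y :=
  contDiff_deformedCasoratian contDiff_fst contDiff_const contDiff_snd contDiff_const p m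

theorem contDiff_deformedCasoratian_xy (p : Fin N → ℝ) (m : ℤ) (t : ℝ) :
    ContDiff ℝ ω ↿fun v x y => deformedCasoratian p m v x t y :=
  contDiff_deformedCasoratian contDiff_fst contDiff_snd.fst contDiff_const contDiff_snd.snd p m

end Deformation

section Bilinear

variable {N : ℕ} {p : Fin N → ℝ}

theorem hirotaDxDy_casoratian (hp : ∀ i, p i ≠ 0) (α β : Fin N → ℝ) (m : ℤ) (x t y : ℝ) :
    hirotaDxDy (fun x y => casoratian α β p (m + 1) x t y)
        (fun x y => casoratian α β p (m + 1) x t y) x y =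
      2 * casoratian α β p (m + 1) x t y ^ 2
        - 2 * casoratian α β p m x t y * casoratian α β p (m + 1 + 1) x t y := by
  have hcont (l : ℤ) : Continuous fun v => deformedCasoratian p l v x t y :=
    continuous_of_contDiff_omega (contDiff_deformedCasoratian_x p l t y) x
  have hD := continuous_hirotaDxDy (contDiff_deformedCasoratian_xy p (m + 1) t)
    (contDiff_deformedCasoratian_xy p (m + 1) t) x y
  have hL := hD.fun_sub ((((hcont (m + 1)).fun_pow 2).const_mul 2).fun_sub
    (((hcont m).const_mul 2).fun_mul (hcont (m + 1 + 1))))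
  have hzero := eq_zero_of_forall_deformedCasoratian_ne_zero hp hL
    (fun v hm hm' => sub_eq_zero.mpr (hirotaDxDy_casoratian_of_ne_zero
      (fun i => mul_ne_zero (hp i) (Real.exp_ne_zero _)) hm hm')) (α, β, 0)
  simp only [deformedCasoratian_zero] at hzero
  exact sub_eq_zero.mp hzero

theorem hirotaD2_casoratian (hp : ∀ i, p i ≠ 0) (α β : Fin N → ℝ) (m : ℤ) (x t y : ℝ) :
    hirotaD2 (fun x => casoratian α β p m x t y)
      (fun x => casoratian α β p (m + 1) x t y) x = 0 := by
  have hL := continuous_hirotaD2 (contDiff_deformedCasoratian_x p m t y)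
    (contDiff_deformedCasoratian_x p (m + 1) t y) x
  have hzero := eq_zero_of_forall_deformedCasoratian_ne_zero hp hL
    (fun v => hirotaD2_casoratian_of_ne_zero fun i => mul_ne_zero (hp i) (Real.exp_ne_zero _))
    (α, β, 0)
  simpa only [deformedCasoratian_zero] using hzero

theorem hirotaD3_sub_hirotaD_casoratian (hp : ∀ i, p i ≠ 0) (α β : Fin N → ℝ) (m : ℤ)
    (x t y : ℝ) :
    hirotaD3 (fun x => casoratian α β p m x t y) (fun x => casoratian α β p (m + 1) x t y) x
      - hirotaD (fun t => casoratian α β p m x t y)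
        (fun t => casoratian α β p (m + 1) x t y) t = 0 := by
  have hL := (continuous_hirotaD3 (contDiff_deformedCasoratian_x p m t y)
    (contDiff_deformedCasoratian_x p (m + 1) t y) x).fun_sub
      (continuous_hirotaD (contDiff_deformedCasoratian_t p m x y)
        (contDiff_deformedCasoratian_t p (m + 1) x y) t)
  have hzero := eq_zero_of_forall_deformedCasoratian_ne_zero hp hL
    (fun v => hirotaD3_sub_hirotaD_casoratian_of_ne_zero
      fun i => mul_ne_zero (hp i) (Real.exp_ne_zero _)) (α, β, 0)
  simpa only [deformedCasoratian_zero] using hzero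

end Bilinear

section Mkdv

variable {f g : ℝ → ℝ} {x : ℝ}

theorem contDiffAt_logDeriv (hf : ContDiff ℝ 3 f) (hfx : f x ≠ 0) :
    ContDiffAt ℝ 2 (logDeriv f) x :=
  (ContDiff.deriv' (n := 2) hf).contDiffAt.div (hf.of_le (by norm_num)).contDiffAt hfx

theorem eventually_hasDerivAt_mul_logDeriv (hf : ContDiff ℝ 3 f) (hfx : f x ≠ 0) :
    ∀ᶠ z in 𝓝 x, HasDerivAt f (f z * logDeriv f z) z := by
  filter_upwards [hf.continuous.continuousAt.eventually_ne hfx] with z hz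
  rw [logDeriv_apply, mul_div_cancel₀ _ hz]
  exact (hf.differentiable three_ne_zero z).hasDerivAt

theorem eventually_hasDerivAt_logDeriv (hf : ContDiff ℝ 3 f) (hfx : f x ≠ 0) :
    ∀ᶠ z in 𝓝 x, HasDerivAt (logDeriv f) (deriv (logDeriv f) z) z :=
  ((contDiffAt_logDeriv hf hfx).eventually (by simp)).mono fun _ hz =>
    (hz.differentiableAt two_ne_zero).hasDerivAt

theorem hasDerivAt_deriv_logDeriv (hf : ContDiff ℝ 3 f) (hfx : f x ≠ 0) :
    HasDerivAt (deriv (logDeriv f)) (deriv (deriv (logDeriv f)) x) x :=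
  (((contDiffAt_logDeriv hf hfx).derivWithin (m := 1) one_add_one_eq_two.le).differentiableAt
    one_ne_zero).hasDerivAt

theorem deriv_two_mul_log_div (hf : DifferentiableAt ℝ f x) (hg : DifferentiableAt ℝ g x)
    (hfx : f x ≠ 0) (hgx : g x ≠ 0) :
    deriv (fun z => 2 * Real.log (f z / g z)) x = 2 * (logDeriv f x - logDeriv g x) := by
  have hlog : DifferentiableAt ℝ (fun z => Real.log (f z / g z)) x :=
    (hf.fun_div hg hgx).log (div_ne_zero hfx hgx)
  rw [deriv_const_mul _ hlog, ← logDeriv_div x hfx hgx hf hg]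
  exact congrArg _ (Real.deriv_log_comp_eq_logDeriv (hf.fun_div hg hgx) (div_ne_zero hfx hgx))

theorem deriv_deriv_deriv_two_mul_log_div (hf : ContDiff ℝ 3 f) (hg : ContDiff ℝ 3 g)
    (hfx : f x ≠ 0) (hgx : g x ≠ 0) :
    deriv (deriv (deriv fun z => 2 * Real.log (f z / g z))) x =
      2 * (deriv (deriv (logDeriv f)) x - deriv (deriv (logDeriv g)) x) := by
  have hderiv : deriv (fun z => 2 * Real.log (f z / g z)) =ᶠ[𝓝 x]
      fun z => 2 * (logDeriv f z - logDeriv g z) := by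
    filter_upwards [hf.continuous.continuousAt.eventually_ne hfx,
      hg.continuous.continuousAt.eventually_ne hgx] with z hfz hgz
    exact deriv_two_mul_log_div (hf.differentiable three_ne_zero z)
      (hg.differentiable three_ne_zero z) hfz hgz
  have hderiv₂ : deriv (fun z => 2 * (logDeriv f z - logDeriv g z)) =ᶠ[𝓝 x]
      fun z => 2 * (deriv (logDeriv f) z - deriv (logDeriv g) z) := by
    filter_upwards [eventually_hasDerivAt_logDeriv hf hfx,
      eventually_hasDerivAt_logDeriv hg hgx] with z hfz hgz
    exact ((hfz.fun_sub hgz).const_mul 2).deriv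
  rw [(hderiv.deriv.trans hderiv₂).deriv_eq]
  exact (((hasDerivAt_deriv_logDeriv hf hfx).fun_sub
    (hasDerivAt_deriv_logDeriv hg hgx)).const_mul 2).deriv

/-- With `w = (log F)_x - (log G)_x` the first equation reads `(log F G)_xx = -w²`, which turns the
second into `(log (F / G))_t = w_xx - 2 w³`. -/
theorem potential_mkdv_of_bilinear {F G : ℝ → ℝ → ℝ} {t : ℝ}
    (hF : ContDiff ℝ 3 fun x => F x t) (hG : ContDiff ℝ 3 fun x => G x t)
    (hFt : DifferentiableAt ℝ (F x) t) (hGt : DifferentiableAt ℝ (G x) t)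
    (hF₀ : F x t ≠ 0) (hG₀ : G x t ≠ 0)
    (hD2 : hirotaD2 (fun x => F x t) (fun x => G x t) x = 0)
    (hD3 : hirotaD3 (fun x => F x t) (fun x => G x t) x - hirotaD (F x) (G x) t = 0) :
    deriv (fun t => 2 * Real.log (F x t / G x t)) t =
      deriv (deriv (deriv fun x => 2 * Real.log (F x t / G x t))) x
        - 1 / 2 * deriv (fun x => 2 * Real.log (F x t / G x t)) x ^ 3 := by
  rw [deriv_two_mul_log_div hFt hGt hF₀ hG₀,
    deriv_deriv_deriv_two_mul_log_div hF hG hF₀ hG₀,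
    deriv_two_mul_log_div (hF.differentiable three_ne_zero x) (hG.differentiable three_ne_zero x)
      hF₀ hG₀]
  have hFlog := eventually_hasDerivAt_mul_logDeriv hF hF₀
  have hGlog := eventually_hasDerivAt_mul_logDeriv hG hG₀
  have hFlog₁ := eventually_hasDerivAt_logDeriv hF hF₀
  have hGlog₁ := eventually_hasDerivAt_logDeriv hG hG₀
  have hD : hirotaD (F x) (G x) t =
      F x t * G x t * (logDeriv (F x) t - logDeriv (G x) t) := by
    simp only [hirotaD, logDeriv_apply]
    field_simp
  have hFG : F x t * G x t ≠ 0 := mul_ne_zero hF₀ hG₀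
  rw [hirotaD2_of_hasDerivAt_mul hFlog hFlog₁.self_of_nhds hGlog hGlog₁.self_of_nhds,
    mul_eq_zero_iff_left hFG] at hD2
  rw [hirotaD3_of_hasDerivAt_mul hFlog hFlog₁ (hasDerivAt_deriv_logDeriv hF hF₀) hGlog hGlog₁
    (hasDerivAt_deriv_logDeriv hG hG₀), hD, ← mul_sub, mul_eq_zero_iff_left hFG] at hD3
  linear_combination (-2) * hD3 + 6 * (logDeriv (fun x => F x t) x
    - logDeriv (fun x => G x t) x) * hD2

end Mkdv

section CasoratianMkdv

variable {N : ℕ} {p : Fin N → ℝ}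

theorem contDiff_casoratian (α β p : Fin N → ℝ) (m : ℤ) {E : Type*} [NormedAddCommGroup E]
    [NormedSpace ℝ E] {x t y : E → ℝ} (hx : ContDiff ℝ ω x) (ht : ContDiff ℝ ω t)
    (hy : ContDiff ℝ ω y) : ContDiff ℝ ω fun e => casoratian α β p m (x e) (t e) (y e) := by
  simpa only [deformedCasoratian_zero] using
    contDiff_deformedCasoratian (contDiff_const (c := (α, β, 0))) hx ht hy p m

theorem contDiff_casoratian_x {n : WithTop ℕ∞} (α β p : Fin N → ℝ) (m : ℤ) (t y : ℝ) :
    ContDiff ℝ n fun x => casoratian α β p m x t y :=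
  (contDiff_casoratian α β p m contDiff_id contDiff_const contDiff_const).of_le le_top

theorem differentiableAt_casoratian_t (α β p : Fin N → ℝ) (m : ℤ) (x t y : ℝ) :
    DifferentiableAt ℝ (fun t => casoratian α β p m x t y) t :=
  (contDiff_casoratian α β p m contDiff_const contDiff_id contDiff_const).differentiable
    (by simp) t

theorem potential_mkdv_casoratian (hp : ∀ i, p i ≠ 0) {α β : Fin N → ℝ} {m : ℤ} {x t y : ℝ}
    (hm : casoratian α β p m x t y ≠ 0) (hm' : casoratian α β p (m + 1) x t y ≠ 0)
    {θ : ℝ → ℝ → ℝ}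
    (hθ : ∀ x t, θ x t = 2 * Real.log (casoratian α β p m x t y / casoratian α β p (m + 1) x t y)) :
    deriv (θ x) t =
      deriv (deriv (deriv fun x => θ x t)) x - 1 / 2 * deriv (fun x => θ x t) x ^ 3 := by
  obtain rfl := funext₂ hθ
  exact potential_mkdv_of_bilinear (F := fun x t => casoratian α β p m x t y)
    (G := fun x t => casoratian α β p (m + 1) x t y) (contDiff_casoratian_x α β p m t y)
    (contDiff_casoratian_x α β p (m + 1) t y) (differentiableAt_casoratian_t α β p m x t y)
    (differentiableAt_casoratian_t α β p (m + 1) x t y) hm hm'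
    (hirotaD2_casoratian hp α β m x t y) (hirotaD3_sub_hirotaD_casoratian hp α β m x t y)

end CasoratianMkdv

section Tau

/-- The gauge-normalized Casorati determinant `τ_N(m)`. -/
noncomputable def tau {N : ℕ} (α β p : Fin N → ℝ) (m : ℤ) (x t y : ℝ) : ℝ :=
  Real.exp (-(x * y)) / (∏ i, p i ^ m) * casoratian α β p m x t y

theorem hasDerivAt_exp_neg_mul_div_left (c x y : ℝ) :
    HasDerivAt (fun x => Real.exp (-(x * y)) / c) (-1 * y * (Real.exp (-(x * y)) / c)) x :=
  (((hasDerivAt_id x).mul_const y).fun_neg.exp.div_const c).congr_deriv (by simp only [id]; ring)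

theorem hasDerivAt_exp_neg_mul_div_right (c x y : ℝ) :
    HasDerivAt (fun y => Real.exp (-(x * y)) / c) (-1 * x * (Real.exp (-(x * y)) / c)) y := by
  simpa only [mul_comm x] using hasDerivAt_exp_neg_mul_div_left c y x

theorem prod_zpow_add_one {ι 𝕜 : Type*} [Fintype ι] [Field 𝕜] {p : ι → 𝕜} (hp : ∀ i, p i ≠ 0)
    (m : ℤ) : ∏ i, p i ^ (m + 1) = (∏ i, p i ^ m) * ∏ i, p i := by
  simp only [zpow_add_one₀ (hp _), Finset.prod_mul_distrib]

variable {N : ℕ} {p : Fin N → ℝ}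

theorem tau_add_two (hp : ∀ i, p i ≠ 0) (α β : Fin N → ℝ) (m : ℤ) :
    tau α β p (m + 2) = tau α β p m := by
  funext x t y
  have hprod : ∏ i, p i ≠ 0 := Finset.prod_ne_zero_iff.mpr fun i _ => hp i
  rw [tau, tau, casoratian_add_two hp, ← one_add_one_eq_two, ← add_assoc, prod_zpow_add_one hp,
    prod_zpow_add_one hp, Finset.prod_pow]
  field_simp

theorem hirotaDxDy_tau_add_one (hp : ∀ i, p i ≠ 0) (α β : Fin N → ℝ) (m : ℤ) (x t y : ℝ) :
    hirotaDxDy (fun x y => tau α β p (m + 1) x t y) (fun x y => tau α β p (m + 1) x t y) x y =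
      -2 * tau α β p m x t y ^ 2 := by
  have hprod : ∏ i, p i ≠ 0 := Finset.prod_ne_zero_iff.mpr fun i _ => hp i
  have hxy : Differentiable ℝ fun y =>
      deriv (fun x => casoratian α β p (m + 1) x t y) x := by
    have hρ : ContDiff ℝ ω ↿fun y x => casoratian α β p (m + 1) x t y :=
      contDiff_casoratian α β p (m + 1) contDiff_snd contDiff_const contDiff_fst
    exact ((contDiff_omega_deriv hρ).comp (contDiff_id.prodMk contDiff_const)).differentiable
      (by simp)
  have hy : Differentiable ℝ fun y => casoratian α β p (m + 1) x t y :=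
    (contDiff_casoratian α β p (m + 1) contDiff_const contDiff_const contDiff_id).differentiable
      (by simp)
  simp only [tau]
  rw [hirotaDxDy_gauge_mul_self (hasDerivAt_exp_neg_mul_div_left _)
    (hasDerivAt_exp_neg_mul_div_right _)
    (fun y => (contDiff_casoratian_x α β p (m + 1) t y).differentiable one_ne_zero x) (hy y)
    (hxy y), hirotaDxDy_casoratian hp, add_assoc, one_add_one_eq_two, casoratian_add_two hp,
    prod_zpow_add_one hp, Finset.prod_pow]
  field_simp
  ring

theorem hirotaDxDy_tau (hp : ∀ i, p i ≠ 0) (α β : Fin N → ℝ) (m : ℤ) (x t y : ℝ) :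
    hirotaDxDy (fun x y => tau α β p m x t y) (fun x y => tau α β p m x t y) x y =
      -2 * tau α β p (m + 1) x t y ^ 2 := by
  have htoda := hirotaDxDy_tau_add_one hp α β (m - 1) x t y
  have hperiod : tau α β p (m - 1) = tau α β p (m + 1) := by
    rw [← tau_add_two hp, ← one_add_one_eq_two, ← add_assoc, sub_add_cancel]
  rwa [sub_add_cancel, hperiod] at htoda

theorem hirotaD2_tau (hp : ∀ i, p i ≠ 0) (α β : Fin N → ℝ) (m : ℤ) (x t y : ℝ) :
    hirotaD2 (fun x => tau α β p m x t y) (fun x => tau α β p (m + 1) x t y) x = 0 := by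
  simp only [tau]
  rw [hirotaD2_gauge_mul (hasDerivAt_exp_neg_mul_div_left _ · y)
    (hasDerivAt_exp_neg_mul_div_left _ · y)
    (contDiff_casoratian_x α β p m t y) (contDiff_casoratian_x α β p (m + 1) t y),
    hirotaD2_casoratian hp, mul_zero]

theorem hirotaD3_sub_hirotaD_tau (hp : ∀ i, p i ≠ 0) (α β : Fin N → ℝ) (m : ℤ) (x t y : ℝ) :
    hirotaD3 (fun x => tau α β p m x t y) (fun x => tau α β p (m + 1) x t y) x
      - hirotaD (fun t => tau α β p m x t y) (fun t => tau α β p (m + 1) x t y) t = 0 := by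
  simp only [tau]
  rw [hirotaD3_gauge_mul (hasDerivAt_exp_neg_mul_div_left _ · y)
    (hasDerivAt_exp_neg_mul_div_left _ · y)
    (contDiff_casoratian_x α β p m t y) (contDiff_casoratian_x α β p (m + 1) t y),
    hirotaD_const_mul _ _ (differentiableAt_casoratian_t α β p m x t y)
      (differentiableAt_casoratian_t α β p (m + 1) x t y),
    ← mul_sub, hirotaD3_sub_hirotaD_casoratian hp, mul_zero]

end Tau

/-- For `f_n^{(i)} = α_i p_i^n e^{η_i} + β_i (-p_i)^n e^{-η_i}` with
`η_i = p_i x + 4p_i³ t + y/p_i`, and `τ_N(k) = e^{-xy} ρ_N(k) / ∏ p_i^k`, the pair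
`τ = τ_N(k)`, `τ̄ = τ_N(k+1)` satisfies `D_x D_y τ·τ = -2τ̄²`, `D_x D_y τ̄·τ̄ = -2τ²`,
`D_x² τ·τ̄ = 0`, `(D_x³ - D_t) τ·τ̄ = 0`; in particular
`θ = 2 log(ρ_N(k)/ρ_N(k+1))` satisfies the potential defocusing mKdV equation
on any open set where `ρ_N(k)` and `ρ_N(k+1)` are both positive. -/
theorem stmt_12 (N : ℕ) (hN : 0 < N) (k : ℤ) (α β p : Fin N → ℝ) (hp : ∀ i, p i ≠ 0)
    (f : Fin N → ℤ → ℝ → ℝ → ℝ → ℝ)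
    (hf : ∀ i n x t y, f i n x t y =
      α i * p i ^ n * Real.exp (p i * x + 4 * p i ^ 3 * t + y / p i)
        + β i * (-p i) ^ n * Real.exp (-(p i * x + 4 * p i ^ 3 * t + y / p i)))
    (ρ : ℤ → ℝ → ℝ → ℝ → ℝ)
    (hρ : ∀ m x t y, ρ m x t y =
      Matrix.det (Matrix.of fun i j : Fin N => f i (m + (j.val : ℤ)) x t y))
    (τ τb : ℝ → ℝ → ℝ → ℝ)
    (hτ : ∀ x t y, τ x t y = Real.exp (-(x * y)) / (∏ i, p i ^ k) * ρ k x t y)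
    (hτb : ∀ x t y, τb x t y =
      Real.exp (-(x * y)) / (∏ i, p i ^ (k + 1)) * ρ (k + 1) x t y)
    (θ : ℝ → ℝ → ℝ → ℝ)
    (hθ : ∀ x t y, θ x t y = 2 * Real.log (ρ k x t y / ρ (k + 1) x t y)) :
    (∀ x t y,
      (deriv (fun y' => deriv (fun x' => τ x' t y') x) y) * τ x t y
        - (deriv (fun x' => τ x' t y) x) * (deriv (fun y' => τ x t y') y)
        - (deriv (fun y' => τ x t y') y) * (deriv (fun x' => τ x' t y) x)
        + τ x t y * (deriv (fun y' => deriv (fun x' => τ x' t y') x) y)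
      = -2 * (τb x t y) ^ 2) ∧
    (∀ x t y,
      (deriv (fun y' => deriv (fun x' => τb x' t y') x) y) * τb x t y
        - (deriv (fun x' => τb x' t y) x) * (deriv (fun y' => τb x t y') y)
        - (deriv (fun y' => τb x t y') y) * (deriv (fun x' => τb x' t y) x)
        + τb x t y * (deriv (fun y' => deriv (fun x' => τb x' t y') x) y)
      = -2 * (τ x t y) ^ 2) ∧
    (∀ x t y,
      deriv (fun x' => deriv (fun x'' => τ x'' t y) x') x * τb x t y
        - 2 * deriv (fun x' => τ x' t y) x * deriv (fun x' => τb x' t y) x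
        + τ x t y * deriv (fun x' => deriv (fun x'' => τb x'' t y) x') x
      = 0) ∧
    (∀ x t y,
      (deriv (fun x' => deriv (fun x'' => deriv (fun s => τ s t y) x'') x') x * τb x t y
        - 3 * deriv (fun x' => deriv (fun x'' => τ x'' t y) x') x
            * deriv (fun x' => τb x' t y) x
        + 3 * deriv (fun x' => τ x' t y) x
            * deriv (fun x' => deriv (fun x'' => τb x'' t y) x') x
        - τ x t y * deriv (fun x' => deriv (fun x'' => deriv (fun s => τb s t y) x'') x') x)
        - (deriv (fun t' => τ x t' y) t * τb x t y - τ x t y * deriv (fun t' => τb x t' y) t)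
      = 0) ∧
    (∀ U : Set (ℝ × ℝ × ℝ), IsOpen U →
      (∀ q ∈ U, 0 < ρ k q.1 q.2.1 q.2.2 ∧ 0 < ρ (k + 1) q.1 q.2.1 q.2.2) →
      ∀ x t y, (x, t, y) ∈ U →
        deriv (fun t' => θ x t' y) t =
          deriv (fun x' => deriv (fun x'' => deriv (fun s => θ s t y) x'') x') x
            - (1 / 2) * (deriv (fun x' => θ x' t y) x) ^ 3) := by
  obtain rfl : ρ = casoratian α β p := by
    funext m x t y
    simp only [hρ, hf]
    rfl
  obtain rfl : τ = tau α β p k := funext fun x => funext₂ (hτ x)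
  obtain rfl : τb = tau α β p (k + 1) := funext fun x => funext₂ (hτb x)
  refine ⟨hirotaDxDy_tau hp α β k, hirotaDxDy_tau_add_one hp α β k, hirotaD2_tau hp α β k,
    hirotaD3_sub_hirotaD_tau hp α β k, fun U _ hpos x t y hU => ?_⟩
  obtain ⟨hk, hk'⟩ := hpos _ hU
  exact potential_mkdv_casoratian hp hk.ne' hk'.ne' fun x t => hθ x t y
end

section
/- Let N be a positive integer, k an integer, and for i = 1,…,N+1 let α_i, β_i ∈ ℝ and p_i ∈ ℝ, p_i ≠ 0. Define g_n^{(i)}(u,v,w) = α_i p_i^n e^{p_i u + p_i² v + p_i³ w} + β_i (−p_i)^n e^{−p_i u + p_i² v − p_i³ w} (i.e. the reduction q_i = −p_i), and let h_N(k) = det[ g^{(i)}_{k+j−1} ]_{1≤i,j≤N}. Then ∂_v h_N(k) = (∑_{i=1}^N p_i²) h_N(k), hence D_v h_{N+1}(k)·h_N(k) = p_{N+1}² h_{N+1}(k) h_N(k), and the mKP bilinear equations reduce to (D_u² − p_{N+1}²) h_{N+1}(k)·h_N(k) = 0 and (D_u³ − 4 D_w + 3 p_{N+1}² D_u) h_{N+1}(k)·h_N(k)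 = 0. -/
/-!
Let `F` and `G` be the determinants of sizes `N + 1` and `N`. Write `f r` and `g r` for them with
the last column index raised by `r`, and let `S_s` be the operation that raises one column index
by `s` and sums over the columns. Since `∂_u`, `∂_v`, `∂_w` raise the index of every entry by
`1`, `2`, `3`, they act on determinants as `S_1`, `S_2`, `S_3`. By the reduction, `S_2` is
multiplication by the trace `∑ p_i²`, which settles the `v`-derivatives.

As for symmetric functions, `∑_{i + r = s} S_{i+1} (f r) = (s + 1) f (s + 1)`, because all other
terms cancel in pairs. For `s = 0, 1, 2` this expresses the `u`- and `w`-derivatives through the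
`f r`. A three-term Plücker relation gives
`(S_1 (f r) - f (r + 1)) g 0 - f r * g 1 + f 0 * g (r + 1) = 0`. The case `r = 1` is the quadratic
equation; the case `r = 2`, together with the `u`-derivative of the quadratic equation, is the
cubic one.
-/

open Finset Function Matrix

section Determinants

variable {R ι : Type*} [CommRing R] [Fintype ι] [DecidableEq ι]

theorem sum_det_updateCol_mul (L A : Matrix ι ι R) :
    ∑ j, (A.updateCol j ((L * A).col j)).det = L.trace * A.det := by
  have cramer_diag (j : ι) :
      (A.updateCol j ((L * A).col j)).det = (A.adjugate * (L * A)) j j := by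
    rw [← cramer_apply, cramer_eq_adjugate_mulVec]
    rfl
  calc ∑ j, (A.updateCol j ((L * A).col j)).det
      = (A.adjugate * (L * A)).trace := sum_congr rfl fun j _ => cramer_diag j
    _ = L.trace * A.det := by
      rw [trace_mul_comm, Matrix.mul_assoc, mul_adjugate, Matrix.mul_smul, Matrix.mul_one,
        trace_smul, smul_eq_mul, mul_comm]

theorem det_mul_apply_eq_sum_det_updateCol_mul (A : Matrix ι ι R) (φ : (ι → R) →ₗ[R] R)
    (x : ι → R) : A.det * φ x = ∑ j, (A.updateCol j x).det * φ (A.col j) := by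
  have cramer_expansion : A.det • x = ∑ j, (A.updateCol j x).det • A.col j := by
    rw [← mulVec_cramer, mulVec_eq_sum]
    simp only [op_smul_eq_smul]
    rfl
  simpa only [map_smul, map_sum, smul_eq_mul] using congrArg φ cramer_expansion

theorem hasDerivAt_det {𝕜 : Type*} [NontriviallyNormedField 𝕜] {A : 𝕜 → Matrix ι ι 𝕜}
    {A' : Matrix ι ι 𝕜} {x : 𝕜} (hA : ∀ i j, HasDerivAt (fun t => A t i j) (A' i j) x) :
    HasDerivAt (fun t => (A t).det) (∑ j, ((A x).updateCol j (A'.col j)).det) x := by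
  let detRows : ContinuousMultilinearMap 𝕜 (fun _ : ι => ι → 𝕜) 𝕜 :=
    ⟨(detRowAlternating (n := ι) (R := 𝕜)).toMultilinearMap, continuous_id.matrix_det⟩
  have hcols : HasDerivAt (fun t j i => A t i j) (fun j i => A' i j) x :=
    hasDerivAt_pi.2 fun j => hasDerivAt_pi.2 fun i => hA i j
  convert! (detRows.hasFDerivAt fun j i => A x i j).comp_hasDerivAt x hcols using 1
  · exact funext fun t => (det_transpose (A t)).symm
  · rw [ContinuousMultilinearMap.linearDeriv_apply]
    refine sum_congr rfl fun j _ => ?_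
    rw [← det_transpose, ← updateRow_transpose]
    rfl

end Determinants

section ColumnSelections

variable {R ι κ : Type*} [CommRing R] [Fintype ι] [DecidableEq ι]

/-- The determinant whose `j`-th column is the column of index `c j` of the array `b`, whose
rows are `b i`. -/
def colDet (b : ι → κ → R) (c : ι → κ) : R :=
  (Matrix.of fun i j => b i (c j)).det

theorem colDet_update (b : ι → κ → R) (c : ι → κ) (j : ι) (x : κ) :
    colDet b (update c j x) =
      ((Matrix.of fun i j => b i (c j)).updateCol j fun i => b i x).det := by
  rw [colDet]
  congr 1
  ext i l
  rcases eq_or_ne l j with rfl | hlj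
  · simp
  · simp [hlj]

theorem colDet_mul_apply (b : ι → κ → R) (c : ι → κ) (φ : (ι → R) →ₗ[R] R) (z : κ) :
    colDet b c * φ (fun i => b i z) =
      ∑ j, colDet b (update c j z) * φ (fun i => b i (c j)) := by
  simp only [colDet_update]
  exact det_mul_apply_eq_sum_det_updateCol_mul _ φ _

theorem colDet_eq_zero_of_eq (b : ι → κ → R) {c : ι → κ} {j l : ι} (hjl : j ≠ l)
    (hc : c j = c l) : colDet b c = 0 :=
  det_zero_of_column_eq hjl fun i => by simp only [of_apply, hc]

theorem colDet_swap (b : ι → κ → R) {c c' : ι → κ} {j l : ι} (hjl : j ≠ l) (hj : c' j = c l)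
    (hl : c' l = c j) (hc : ∀ i, i ≠ j → i ≠ l → c' i = c i) : colDet b c' = -colDet b c := by
  have hswap : c' = c ∘ Equiv.swap j l := by
    ext i
    rcases eq_or_ne i j with rfl | hij
    · simp [hj]
    rcases eq_or_ne i l with rfl | hil
    · simp [hl]
    · simp [hc i hij hil, Equiv.swap_apply_of_ne_of_ne hij hil]
  have hdet := det_permute' (Equiv.swap j l) (Matrix.of fun i j => b i (c j))
  rw [Equiv.Perm.sign_swap hjl, Units.val_neg, Units.val_one, Int.cast_neg, Int.cast_one,
    neg_one_mul] at hdet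
  rw [hswap]
  exact hdet

theorem colDet_snoc_snoc_swap {m : ℕ} (b : Fin (m + 2) → κ → R) (c : Fin m → κ) (x y : κ) :
    colDet b (Fin.snoc (Fin.snoc c y) x) = -colDet b (Fin.snoc (Fin.snoc c x) y) := by
  refine colDet_swap b (Fin.castSucc_ne_last (Fin.last m)) (by simp) (by simp) fun i => ?_
  refine Fin.lastCases ?_ (fun i => Fin.lastCases ?_ (fun i => ?_) i) i <;> simp

/-- The minors on the first `m + 1` rows are linear functionals of the last column that vanish
on the columns `c`; the relation is Cramer's rule evaluated by such a functional. -/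
theorem plucker_colDet {m : ℕ} (b : Fin (m + 2) → κ → R) (c : Fin m → κ) (x y z : κ) :
    colDet b (Fin.snoc (Fin.snoc c x) y) * colDet (b ∘ Fin.castSucc) (Fin.snoc c z) -
        colDet b (Fin.snoc (Fin.snoc c x) z) * colDet (b ∘ Fin.castSucc) (Fin.snoc c y) +
        colDet b (Fin.snoc (Fin.snoc c y) z) * colDet (b ∘ Fin.castSucc) (Fin.snoc c x) = 0 := by
  let minorMatrix := Matrix.of fun i j => (b ∘ Fin.castSucc) i ((Fin.snoc c x : Fin (m + 1) → κ) j)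
  let φ : (Fin (m + 2) → R) →ₗ[R] R :=
    LinearMap.proj (Fin.last m) ∘ₗ cramer minorMatrix ∘ₗ LinearMap.funLeft R R Fin.castSucc
  have φ_col (k : κ) : φ (fun i => b i k) = colDet (b ∘ Fin.castSucc) (Fin.snoc c k) := by
    rw [← Fin.update_snoc_last (α := fun _ => κ) x c k, colDet_update]
    rfl
  have hrepeat (j : Fin m) : colDet (b ∘ Fin.castSucc) (Fin.snoc c (c j)) = 0 :=
    colDet_eq_zero_of_eq _ (Fin.castSucc_ne_last j) (by simp)
  have hexpand := colDet_mul_apply b (Fin.snoc (Fin.snoc c x) y) φ z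
  simp only [Fin.sum_univ_castSucc, Fin.snoc_castSucc, Fin.snoc_last, φ_col, hrepeat, mul_zero,
    sum_const_zero, zero_add, ← Fin.snoc_update, Fin.update_snoc_last] at hexpand
  rw [colDet_snoc_snoc_swap b c y z] at hexpand
  linear_combination hexpand

end ColumnSelections

section Shifts

variable {R ι : Type*} [CommRing R] [Fintype ι] [DecidableEq ι]

/-- The sum of the determinants obtained from `colDet b c` by raising one column index by `s`.
It is the derivative of `colDet b c` along a flow that sends the column `n` to the column
`n + s`, and the counterpart of multiplying a Schur function by the power sum of degree `s`. -/
def shiftSum (b : ι → ℕ → R) (s : ℕ) (c : ι → ℕ) : R :=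
  ∑ j, colDet b (update c j (c j + s))

theorem shiftSum_eq_sum_mul_colDet {b : ι → ℕ → R} {s : ℕ} {P : ι → R}
    (hb : ∀ i n, b i (n + s) = P i * b i n) (c : ι → ℕ) :
    shiftSum b s c = (∑ i, P i) * colDet b c := by
  rw [← trace_diagonal, colDet, ← sum_det_updateCol_mul]
  refine sum_congr rfl fun j _ => ?_
  rw [colDet_update]
  congr 2
  ext i
  simp [hb]

theorem hasDerivAt_colDet {𝕜 : Type*} [NontriviallyNormedField 𝕜] {b : 𝕜 → ι → ℕ → 𝕜} {s : ℕ}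
    {t : 𝕜} (hb : ∀ i n, HasDerivAt (fun t' => b t' i n) (b t i (n + s)) t) (c : ι → ℕ) :
    HasDerivAt (fun t' => colDet (b t') c) (shiftSum (b t) s c) t := by
  simp only [shiftSum, colDet_update]
  exact hasDerivAt_det (A' := Matrix.of fun i j => b t i (c j + s)) fun i j => hb i (c j)

/-- The column indices `0, …, m - 1, m + r`. For the array of complete homogeneous symmetric
functions they select the Jacobi–Trudi determinant of the one-row partition `(r)`. -/
def rowIndex (m r : ℕ) : Fin (m + 1) → ℕ :=
  Fin.snoc (fun j : Fin m => (j : ℕ)) (m + r)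

@[simp]
theorem rowIndex_castSucc (m r : ℕ) (j : Fin m) : rowIndex m r j.castSucc = j :=
  Fin.snoc_castSucc ..

@[simp]
theorem rowIndex_last (m r : ℕ) : rowIndex m r (Fin.last m) = m + r :=
  Fin.snoc_last ..

theorem rowIndex_zero (m : ℕ) : rowIndex m 0 = Fin.val := by
  ext j
  refine Fin.lastCases ?_ (fun j => ?_) j <;> simp

theorem rowIndex_succ (m r : ℕ) :
    rowIndex (m + 1) r = Fin.snoc (Fin.snoc (fun j : Fin m => (j : ℕ)) m) (m + 1 + r) := by
  rw [rowIndex]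
  congr 1
  exact (rowIndex_zero m).symm

theorem sum_antidiagonal_eq_zero_of_alternating {D : ℕ → ℕ → R} {j m : ℕ} (hjm : j < m)
    (hneg : ∀ x y, D y x = -D x y) (hdiag : ∀ x, D x x = 0)
    (hzero : ∀ x y, j < x → x < m → D x y = 0) (s : ℕ) :
    ∑ x ∈ antidiagonal s, D (j + (x.1 + 1)) (m + x.2) = 0 := by
  rw [← sum_filter_add_sum_filter_not _ fun x : ℕ × ℕ => m ≤ j + (x.1 + 1)]
  have hsmall : ∑ x ∈ antidiagonal s with ¬m ≤ j + (x.1 + 1), D (j + (x.1 + 1)) (m + x.2) = 0 :=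
    sum_eq_zero fun x hx => hzero _ _ (by lia) (not_le.1 (mem_filter.1 hx).2)
  rw [hsmall, add_zero]
  -- The involution exchanges the two arguments of `D`.
  refine sum_involution (fun x _ => (m + x.2 - (j + 1), j + (x.1 + 1) - m)) ?_ ?_ ?_ ?_ <;>
    rintro ⟨i, r⟩ hx <;> simp only [mem_filter, HasAntidiagonal.mem_antidiagonal] at hx ⊢
  · rw [show j + (m + r - (j + 1) + 1) = m + r by lia,
      show m + (j + (i + 1) - m) = j + (i + 1) by lia, hneg, neg_add_cancel]
  · intro hne hfix
    rw [Prod.mk.injEq] at hfix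
    exact hne (by rw [show m + r = j + (i + 1) by lia, hdiag])
  · lia
  · ext <;> simp only <;> lia

theorem sum_antidiagonal_colDet_update_castSucc_rowIndex {m : ℕ} (b : Fin (m + 1) → ℕ → R)
    (j : Fin m) (s : ℕ) :
    ∑ x ∈ antidiagonal s,
      colDet b (update (rowIndex m x.2) j.castSucc (j + (x.1 + 1))) = 0 := by
  let D (x y : ℕ) : R := colDet b (Fin.snoc (update (fun j : Fin m => (j : ℕ)) j x) y)
  have hj : j.castSucc ≠ Fin.last m := Fin.castSucc_ne_last j
  have hneg (x y : ℕ) : D y x = -D x y := by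
    refine colDet_swap b hj (by simp) (by simp) fun i => ?_
    refine Fin.lastCases (by simp) (fun i hij _ => ?_) i
    have hij' : i ≠ j := fun h => hij (congrArg Fin.castSucc h)
    simp [hij']
  have hdiag (x : ℕ) : D x x = 0 := colDet_eq_zero_of_eq b hj (by simp)
  have hzero (x y : ℕ) (hjx : j < x) (hxm : x < m) : D x y = 0 := by
    lift x to Fin m using hxm
    have hxj : x ≠ j := fun h => hjx.ne' (congrArg Fin.val h)
    exact colDet_eq_zero_of_eq b ((Fin.castSucc_injective m).ne hxj) (by simp [hxj])
  simpa only [rowIndex, ← Fin.snoc_update] using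
    sum_antidiagonal_eq_zero_of_alternating j.isLt hneg hdiag hzero s

theorem sum_antidiagonal_shiftSum_rowIndex {m : ℕ} (b : Fin (m + 1) → ℕ → R) (s : ℕ) :
    ∑ x ∈ antidiagonal s, shiftSum b (x.1 + 1) (rowIndex m x.2) =
      (s + 1) * colDet b (rowIndex m (s + 1)) := by
  have hlast (x : ℕ × ℕ) (hx : x ∈ antidiagonal s) :
      update (rowIndex m x.2) (Fin.last m) (m + x.2 + (x.1 + 1)) = rowIndex m (s + 1) := by
    rw [rowIndex, rowIndex, Fin.update_snoc_last, ← HasAntidiagonal.mem_antidiagonal.1 hx]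
    congr 1
    ring
  simp only [shiftSum, Fin.sum_univ_castSucc, rowIndex_castSucc, rowIndex_last]
  rw [sum_add_distrib, sum_comm, sum_eq_zero fun j _ =>
    sum_antidiagonal_colDet_update_castSucc_rowIndex b j s, zero_add,
    sum_congr rfl fun x hx => congrArg (colDet b) (hlast x hx)]
  simp

theorem shiftSum_one_rowIndex_succ {m : ℕ} (b : Fin (m + 2) → ℕ → R) (r : ℕ) :
    shiftSum b 1 (rowIndex (m + 1) r) =
      colDet b (Fin.snoc (Fin.snoc (fun j : Fin m => (j : ℕ)) (m + 1)) (m + 1 + r)) +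
        colDet b (rowIndex (m + 1) (r + 1)) := by
  have hinit (j : Fin m) :
      colDet b (update (rowIndex (m + 1) r) j.castSucc.castSucc (j + 1)) = 0 := by
    have hne : j.succ.castSucc ≠ j.castSucc.castSucc :=
      (Fin.castSucc_injective _).ne (Fin.castSucc_lt_succ (i := j)).ne'
    refine colDet_eq_zero_of_eq b hne ?_
    rw [update_of_ne hne, rowIndex_castSucc, update_self, Fin.val_succ]
  have hpenultimate : update (rowIndex (m + 1) r) (Fin.last m).castSucc (m + 1) =
      Fin.snoc (Fin.snoc (fun j : Fin m => (j : ℕ)) (m + 1)) (m + 1 + r) := by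
    rw [rowIndex_succ, ← Fin.snoc_update, Fin.update_snoc_last]
  have hlast : update (rowIndex (m + 1) r) (Fin.last (m + 1)) (m + 1 + r + 1) =
      rowIndex (m + 1) (r + 1) :=
    Fin.update_snoc_last ..
  simp only [shiftSum, Fin.sum_univ_castSucc, rowIndex_castSucc, rowIndex_last, Fin.val_castSucc,
    Fin.val_last, hinit, sum_const_zero, zero_add, hpenultimate, hlast]

theorem plucker_rowIndex {m : ℕ} (b : Fin (m + 2) → ℕ → R) (r : ℕ) :
    (shiftSum b 1 (rowIndex (m + 1) r) - colDet b (rowIndex (m + 1) (r + 1))) *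
          colDet (b ∘ Fin.castSucc) (rowIndex m 0) -
        colDet b (rowIndex (m + 1) r) * colDet (b ∘ Fin.castSucc) (rowIndex m 1) +
        colDet b (rowIndex (m + 1) 0) * colDet (b ∘ Fin.castSucc) (rowIndex m (r + 1)) = 0 := by
  have hplucker := plucker_colDet b (fun j : Fin m => (j : ℕ)) m (m + 1) (m + 1 + r)
  have hindex : m + (r + 1) = m + 1 + r := by ring
  rw [shiftSum_one_rowIndex_succ, add_sub_cancel_right, rowIndex_succ m r, rowIndex_succ m 0]
  simp only [rowIndex, add_zero, hindex]
  linear_combination hplucker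

end Shifts

section PeriodTwo

variable {R : Type*} [CommRing R] {m : ℕ}

theorem shiftSum_one_rowIndex_zero (b : Fin (m + 1) → ℕ → R) :
    shiftSum b 1 (rowIndex m 0) = colDet b (rowIndex m 1) := by
  simpa using sum_antidiagonal_shiftSum_rowIndex b 0

theorem shiftSum_one_rowIndex_one {b : Fin (m + 1) → ℕ → R} {P : Fin (m + 1) → R}
    (hb : ∀ i n, b i (n + 2) = P i * b i n) :
    shiftSum b 1 (rowIndex m 1) =
      2 * colDet b (rowIndex m 2) - (∑ i, P i) * colDet b (rowIndex m 0) := by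
  have hnewton := sum_antidiagonal_shiftSum_rowIndex b 1
  simp only [Nat.sum_antidiagonal_succ, Nat.antidiagonal_zero, sum_singleton, zero_add,
    Nat.reduceAdd, shiftSum_eq_sum_mul_colDet hb] at hnewton
  push_cast at hnewton
  linear_combination hnewton

theorem shiftSum_one_rowIndex_two {b : Fin (m + 1) → ℕ → R} {P : Fin (m + 1) → R}
    (hb : ∀ i n, b i (n + 2) = P i * b i n) :
    shiftSum b 1 (rowIndex m 2) =
      3 * colDet b (rowIndex m 3) - (∑ i, P i) * colDet b (rowIndex m 1) -
        shiftSum b 3 (rowIndex m 0) := by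
  have hnewton := sum_antidiagonal_shiftSum_rowIndex b 2
  simp only [Nat.sum_antidiagonal_succ, Nat.antidiagonal_zero, sum_singleton, zero_add,
    Nat.reduceAdd, shiftSum_eq_sum_mul_colDet hb] at hnewton
  push_cast at hnewton
  linear_combination hnewton

theorem hirota_sq_colDet_rowIndex {b : Fin (m + 2) → ℕ → R} {P : Fin (m + 2) → R}
    (hb : ∀ i n, b i (n + 2) = P i * b i n) :
    (2 * colDet b (rowIndex (m + 1) 2) - (∑ i, P i) * colDet b (rowIndex (m + 1) 0)) *
          colDet (b ∘ Fin.castSucc) (rowIndex m 0) -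
        2 * colDet b (rowIndex (m + 1) 1) * colDet (b ∘ Fin.castSucc) (rowIndex m 1) +
        colDet b (rowIndex (m + 1) 0) * (2 * colDet (b ∘ Fin.castSucc) (rowIndex m 2) -
          (∑ i : Fin (m + 1), P i.castSucc) * colDet (b ∘ Fin.castSucc) (rowIndex m 0)) =
      P (Fin.last (m + 1)) *
        (colDet b (rowIndex (m + 1) 0) * colDet (b ∘ Fin.castSucc) (rowIndex m 0)) := by
  have hplucker := plucker_rowIndex b 1
  rw [shiftSum_one_rowIndex_one hb, Fin.sum_univ_castSucc] at hplucker
  rw [Fin.sum_univ_castSucc]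
  linear_combination 2 * hplucker

end PeriodTwo

section Flows

variable {𝕜 : Type*} [NontriviallyNormedField 𝕜]

theorem hirota_sq_deriv {f f₁ f₂ g g₁ g₂ : 𝕜 → 𝕜} {f₃ g₃ c x : 𝕜}
    (hf : HasDerivAt f (f₁ x) x) (hf₁ : HasDerivAt f₁ (f₂ x) x) (hf₂ : HasDerivAt f₂ f₃ x)
    (hg : HasDerivAt g (g₁ x) x) (hg₁ : HasDerivAt g₁ (g₂ x) x) (hg₂ : HasDerivAt g₂ g₃ x)
    (hfg : ∀ y, f₂ y * g y - 2 * f₁ y * g₁ y + f y * g₂ y = c * (f y * g y)) :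
    f₃ * g x - f₂ x * g₁ x - f₁ x * g₂ x + f x * g₃ = c * (f₁ x * g x + f x * g₁ x) := by
  have hleft := ((hf₂.fun_mul hg).fun_sub ((hf₁.const_mul 2).fun_mul hg₁)).fun_add (hf.fun_mul hg₂)
  have hright := (hf.fun_mul hg).const_mul c
  rw [funext hfg] at hleft
  linear_combination hleft.unique hright

/-- The rows `b u v w i` solve the KP linear flows, on which `∂_u`, `∂_v` and `∂_w` shift the
index `n` by `1`, `2` and `3`, under the two-reduction: shifting by `2` multiplies row `i` by
the constant `P i`. -/
structure IsReducedKPFlow {ι : Type*} (b : 𝕜 → 𝕜 → 𝕜 → ι → ℕ → 𝕜) (P : ι → 𝕜) : Prop where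
  hasDerivAt_u : ∀ u v w i n, HasDerivAt (fun u' => b u' v w i n) (b u v w i (n + 1)) u
  hasDerivAt_v : ∀ u v w i n, HasDerivAt (fun v' => b u v' w i n) (b u v w i (n + 2)) v
  hasDerivAt_w : ∀ u v w i n, HasDerivAt (fun w' => b u v w' i n) (b u v w i (n + 3)) w
  apply_add_two : ∀ u v w i n, b u v w i (n + 2) = P i * b u v w i n

namespace IsReducedKPFlow

theorem comp {ι ι' : Type*} {b : 𝕜 → 𝕜 → 𝕜 → ι → ℕ → 𝕜} {P : ι → 𝕜}
    (hb : IsReducedKPFlow b P) (e : ι' → ι) :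
    IsReducedKPFlow (fun u v w => b u v w ∘ e) fun i => P (e i) where
  hasDerivAt_u u v w i := hb.hasDerivAt_u u v w (e i)
  hasDerivAt_v u v w i := hb.hasDerivAt_v u v w (e i)
  hasDerivAt_w u v w i := hb.hasDerivAt_w u v w (e i)
  apply_add_two u v w i := hb.apply_add_two u v w (e i)

theorem linearCombination {ι : Type*} {b c : 𝕜 → 𝕜 → 𝕜 → ι → ℕ → 𝕜} {P : ι → 𝕜}
    (hb : IsReducedKPFlow b P) (hc : IsReducedKPFlow c P) (α β : ι → 𝕜) :
    IsReducedKPFlow (fun u v w i n => α i * b u v w i n + β i * c u v w i n) P where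
  hasDerivAt_u u v w i n :=
    ((hb.hasDerivAt_u u v w i n).const_mul _).fun_add ((hc.hasDerivAt_u u v w i n).const_mul _)
  hasDerivAt_v u v w i n :=
    ((hb.hasDerivAt_v u v w i n).const_mul _).fun_add ((hc.hasDerivAt_v u v w i n).const_mul _)
  hasDerivAt_w u v w i n :=
    ((hb.hasDerivAt_w u v w i n).const_mul _).fun_add ((hc.hasDerivAt_w u v w i n).const_mul _)
  apply_add_two u v w i n := by
    rw [hb.apply_add_two, hc.apply_add_two]
    ring

theorem deriv_v_colDet {ι : Type*} [Fintype ι] [DecidableEq ι] {b : 𝕜 → 𝕜 → 𝕜 → ι → ℕ → 𝕜}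
    {P : ι → 𝕜} (hb : IsReducedKPFlow b P) (u v w : 𝕜) (c : ι → ℕ) :
    deriv (fun v' => colDet (b u v' w) c) v = (∑ i, P i) * colDet (b u v w) c := by
  rw [← shiftSum_eq_sum_mul_colDet (hb.apply_add_two u v w)]
  exact (hasDerivAt_colDet (hb.hasDerivAt_v u v w) c).deriv

theorem deriv_w_colDet {ι : Type*} [Fintype ι] [DecidableEq ι] {b : 𝕜 → 𝕜 → 𝕜 → ι → ℕ → 𝕜}
    {P : ι → 𝕜} (hb : IsReducedKPFlow b P) (u v w : 𝕜) (c : ι → ℕ) :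
    deriv (fun w' => colDet (b u v w') c) w = shiftSum (b u v w) 3 c :=
  (hasDerivAt_colDet (hb.hasDerivAt_w u v w) c).deriv

section RowIndex

variable {m : ℕ} {b : 𝕜 → 𝕜 → 𝕜 → Fin (m + 1) → ℕ → 𝕜} {P : Fin (m + 1) → 𝕜}

theorem hasDerivAt_u_rowIndex_zero (hb : IsReducedKPFlow b P) (u v w : 𝕜) :
    HasDerivAt (fun u' => colDet (b u' v w) (rowIndex m 0))
      (colDet (b u v w) (rowIndex m 1)) u := by
  rw [← shiftSum_one_rowIndex_zero]
  exact hasDerivAt_colDet (hb.hasDerivAt_u u v w) _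

theorem hasDerivAt_u_rowIndex_one (hb : IsReducedKPFlow b P) (u v w : 𝕜) :
    HasDerivAt (fun u' => colDet (b u' v w) (rowIndex m 1))
      (2 * colDet (b u v w) (rowIndex m 2) - (∑ i, P i) * colDet (b u v w) (rowIndex m 0)) u := by
  rw [← shiftSum_one_rowIndex_one (hb.apply_add_two u v w)]
  exact hasDerivAt_colDet (hb.hasDerivAt_u u v w) _

theorem hasDerivAt_u_rowIndex_two_sub_zero (hb : IsReducedKPFlow b P) (u v w : 𝕜) :
    HasDerivAt (fun u' => 2 * colDet (b u' v w) (rowIndex m 2) -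
        (∑ i, P i) * colDet (b u' v w) (rowIndex m 0))
      (2 * shiftSum (b u v w) 1 (rowIndex m 2) -
        (∑ i, P i) * colDet (b u v w) (rowIndex m 1)) u :=
  ((hasDerivAt_colDet (hb.hasDerivAt_u u v w) _).const_mul 2).fun_sub
    ((hb.hasDerivAt_u_rowIndex_zero u v w).const_mul _)

end RowIndex

/-- The left side is `(D_u³ - 4 D_w + 3 P_{N+1} D_u) F·G` with the derivatives evaluated. Three
times the `u`-derivative of the quadratic equation is added so that the Newton identity removes
the third derivative of `G`, which the Plücker relation does not contain. -/
theorem hirota_cube_colDet_rowIndex {m : ℕ} {b : 𝕜 → 𝕜 → 𝕜 → Fin (m + 2) → ℕ → 𝕜}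
    {P : Fin (m + 2) → 𝕜} (hb : IsReducedKPFlow b P) (u v w : 𝕜) :
    let f r := colDet (b u v w) (rowIndex (m + 1) r)
    let g r := colDet (b u v w ∘ Fin.castSucc) (rowIndex m r)
    let σf := ∑ i, P i
    let σg := ∑ i : Fin (m + 1), P i.castSucc
    (2 * shiftSum (b u v w) 1 (rowIndex (m + 1) 2) - σf * f 1) * g 0
        - 3 * (2 * f 2 - σf * f 0) * g 1 + 3 * f 1 * (2 * g 2 - σg * g 0)
        - f 0 * (2 * shiftSum (b u v w ∘ Fin.castSucc) 1 (rowIndex m 2) - σg * g 1)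
      - 4 * (shiftSum (b u v w) 3 (rowIndex (m + 1) 0) * g 0
          - f 0 * shiftSum (b u v w ∘ Fin.castSucc) 3 (rowIndex m 0))
      + 3 * P (Fin.last (m + 1)) * (f 1 * g 0 - f 0 * g 1) = 0 := by
  have hb' := hb.comp Fin.castSucc
  have hsq_deriv := hirota_sq_deriv (hb.hasDerivAt_u_rowIndex_zero u v w)
    (hb.hasDerivAt_u_rowIndex_one u v w) (hb.hasDerivAt_u_rowIndex_two_sub_zero u v w)
    (hb'.hasDerivAt_u_rowIndex_zero u v w) (hb'.hasDerivAt_u_rowIndex_one u v w)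
    (hb'.hasDerivAt_u_rowIndex_two_sub_zero u v w)
    fun u' => hirota_sq_colDet_rowIndex (hb.apply_add_two u' v w)
  have hplucker := plucker_rowIndex (b u v w) 2
  have hnewton_f := shiftSum_one_rowIndex_two (hb.apply_add_two u v w)
  have hnewton_g := shiftSum_one_rowIndex_two (hb'.apply_add_two u v w)
  intro f g σf σg
  simp only [f, g, σf, σg, Fin.sum_univ_castSucc P] at *
  linear_combination 12 * hplucker - 3 * hsq_deriv
    - 4 * colDet (b u v w ∘ Fin.castSucc) (rowIndex m 0) * hnewton_f
    + 4 * colDet (b u v w) (rowIndex (m + 1) 0) * hnewton_g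

end IsReducedKPFlow

theorem stmt_14_general {m : ℕ} {b : 𝕜 → 𝕜 → 𝕜 → Fin (m + 2) → ℕ → 𝕜} {P : Fin (m + 2) → 𝕜}
    (hb : IsReducedKPFlow b P) {F G : 𝕜 → 𝕜 → 𝕜 → 𝕜}
    (hF : ∀ u v w, F u v w = colDet (b u v w) Fin.val)
    (hG : ∀ u v w, G u v w = colDet (b u v w ∘ Fin.castSucc) Fin.val) (u v w : 𝕜) :
    deriv (fun v' => G u v' w) v = (∑ i : Fin (m + 1), P i.castSucc) * G u v w ∧
    deriv (fun v' => F u v' w) v * G u v w - F u v w * deriv (fun v' => G u v' w) v =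
      P (Fin.last (m + 1)) * (F u v w * G u v w) ∧
    deriv (fun u' => deriv (fun u'' => F u'' v w) u') u * G u v w
        - 2 * deriv (fun u' => F u' v w) u * deriv (fun u' => G u' v w) u
        + F u v w * deriv (fun u' => deriv (fun u'' => G u'' v w) u') u
        - P (Fin.last (m + 1)) * (F u v w * G u v w) = 0 ∧
    (deriv (fun u' => deriv (fun u'' => deriv (fun s => F s v w) u'') u') u * G u v w
        - 3 * deriv (fun u' => deriv (fun u'' => F u'' v w) u') u
            * deriv (fun u' => G u' v w) u
        + 3 * deriv (fun u' => F u' v w) u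
            * deriv (fun u' => deriv (fun u'' => G u'' v w) u') u
        - F u v w * deriv (fun u' => deriv (fun u'' => deriv (fun s => G s v w) u'') u') u)
      - 4 * (deriv (fun w' => F u v w') w * G u v w - F u v w * deriv (fun w' => G u v w') w)
      + 3 * P (Fin.last (m + 1)) *
          (deriv (fun u' => F u' v w) u * G u v w - F u v w * deriv (fun u' => G u' v w) u)
      = 0 := by
  have hb' := hb.comp Fin.castSucc
  simp only [hF, hG, ← rowIndex_zero, hb.deriv_v_colDet, hb'.deriv_v_colDet, hb.deriv_w_colDet,
    hb'.deriv_w_colDet, (hb.hasDerivAt_u_rowIndex_zero _ _ _).deriv,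
    (hb.hasDerivAt_u_rowIndex_one _ _ _).deriv, (hb.hasDerivAt_u_rowIndex_two_sub_zero _ _ _).deriv,
    (hb'.hasDerivAt_u_rowIndex_zero _ _ _).deriv, (hb'.hasDerivAt_u_rowIndex_one _ _ _).deriv,
    (hb'.hasDerivAt_u_rowIndex_two_sub_zero _ _ _).deriv, true_and]
  refine ⟨?_, ?_, hb.hirota_cube_colDet_rowIndex u v w⟩
  · rw [Fin.sum_univ_castSucc P]
    ring
  · exact sub_eq_zero.2 (hirota_sq_colDet_rowIndex (hb.apply_add_two u v w))

end Flows

section PlaneWaves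

/-- The exponential solution `q ^ n * exp (q u + q² v + q³ w)` of the KP linear flows. -/
noncomputable def planeWave (q : ℝ) (n : ℤ) (u v w : ℝ) : ℝ :=
  q ^ n * Real.exp (q * u + q ^ 2 * v + q ^ 3 * w)

theorem hasDerivAt_zpow_mul_exp {q : ℝ} (hq : q ≠ 0) (n : ℤ) (s : ℕ) {θ : ℝ → ℝ} {x : ℝ}
    (hθ : HasDerivAt θ (q ^ s) x) :
    HasDerivAt (fun t => q ^ n * Real.exp (θ t)) (q ^ (n + s) * Real.exp (θ x)) x := by
  refine (hθ.exp.const_mul (q ^ n)).congr_deriv ?_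
  rw [zpow_add₀ hq, zpow_natCast]
  ring

theorem isReducedKPFlow_planeWave {ι : Type*} (k : ℤ) {q : ι → ℝ} (hq : ∀ i, q i ≠ 0) :
    IsReducedKPFlow (fun u v w i (n : ℕ) => planeWave (q i) (k + n) u v w) fun i => q i ^ 2 where
  hasDerivAt_u u v w i n := by
    have hphase : HasDerivAt (fun u' => q i * u' + q i ^ 2 * v + q i ^ 3 * w) (q i ^ 1) u := by
      simpa using (((hasDerivAt_id' u).const_mul (q i)).add_const (q i ^ 2 * v)).add_const
        (q i ^ 3 * w)
    simpa only [planeWave, add_assoc, Nat.cast_add] using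
      hasDerivAt_zpow_mul_exp (hq i) (k + n) 1 hphase
  hasDerivAt_v u v w i n := by
    have hphase : HasDerivAt (fun v' => q i * u + q i ^ 2 * v' + q i ^ 3 * w) (q i ^ 2) v := by
      simpa using (((hasDerivAt_id' v).const_mul (q i ^ 2)).const_add (q i * u)).add_const
        (q i ^ 3 * w)
    simpa only [planeWave, add_assoc, Nat.cast_add] using
      hasDerivAt_zpow_mul_exp (hq i) (k + n) 2 hphase
  hasDerivAt_w u v w i n := by
    have hphase : HasDerivAt (fun w' => q i * u + q i ^ 2 * v + q i ^ 3 * w') (q i ^ 3) w := by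
      simpa using ((hasDerivAt_id' w).const_mul (q i ^ 3)).const_add (q i * u + q i ^ 2 * v)
    simpa only [planeWave, add_assoc, Nat.cast_add] using
      hasDerivAt_zpow_mul_exp (hq i) (k + n) 3 hphase
  apply_add_two u v w i n := by
    rw [planeWave, planeWave, Nat.cast_add, ← add_assoc, zpow_add₀ (hq i), zpow_natCast]
    ring

end PlaneWaves

/-- For `g_n^{(i)} = α_i p_i^n e^{p_i u + p_i² v + p_i³ w}
+ β_i (-p_i)^n e^{-p_i u + p_i² v - p_i³ w}` (the reduction `q_i = -p_i`) and
`h_N(k) = det[g^{(i)}_{k+j-1}]`, one has `∂_v h_N(k) = (∑_{i=1}^N p_i²) h_N(k)`,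
hence `D_v h_{N+1}(k)·h_N(k) = p_{N+1}² h_{N+1}(k) h_N(k)`, and the mKP bilinear
equations reduce to `(D_u² - p_{N+1}²) h_{N+1}(k)·h_N(k) = 0` and
`(D_u³ - 4D_w + 3p_{N+1}² D_u) h_{N+1}(k)·h_N(k) = 0`. -/
theorem stmt_14 (N : ℕ) (hNpos : 0 < N) (k : ℤ) (α β p : Fin (N + 1) → ℝ)
    (hp : ∀ i, p i ≠ 0)
    (g : Fin (N + 1) → ℤ → ℝ → ℝ → ℝ → ℝ)
    (hg : ∀ i n u v w, g i n u v w =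
      α i * p i ^ n * Real.exp (p i * u + p i ^ 2 * v + p i ^ 3 * w)
        + β i * (-p i) ^ n * Real.exp (-(p i * u) + p i ^ 2 * v - p i ^ 3 * w))
    (hN hN1 : ℤ → ℝ → ℝ → ℝ → ℝ)
    (hhN : ∀ m u v w, hN m u v w =
      Matrix.det (Matrix.of fun i j : Fin N => g (Fin.castSucc i) (m + (j.val : ℤ)) u v w))
    (hhN1 : ∀ m u v w, hN1 m u v w =
      Matrix.det (Matrix.of fun i j : Fin (N + 1) => g i (m + (j.val : ℤ)) u v w)) :
    (∀ u v w, deriv (fun v' => hN k u v' w) v =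
      (∑ i : Fin N, p (Fin.castSucc i) ^ 2) * hN k u v w) ∧
    (∀ u v w,
      deriv (fun v' => hN1 k u v' w) v * hN k u v w
        - hN1 k u v w * deriv (fun v' => hN k u v' w) v
      = p (Fin.last N) ^ 2 * (hN1 k u v w * hN k u v w)) ∧
    (∀ u v w,
      deriv (fun u' => deriv (fun u'' => hN1 k u'' v w) u') u * hN k u v w
        - 2 * deriv (fun u' => hN1 k u' v w) u * deriv (fun u' => hN k u' v w) u
        + hN1 k u v w * deriv (fun u' => deriv (fun u'' => hN k u'' v w) u') u
        - p (Fin.last N) ^ 2 * (hN1 k u v w * hN k u v w)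
      = 0) ∧
    (∀ u v w,
      (deriv (fun u' => deriv (fun u'' => deriv (fun s => hN1 k s v w) u'') u') u
          * hN k u v w
        - 3 * deriv (fun u' => deriv (fun u'' => hN1 k u'' v w) u') u
            * deriv (fun u' => hN k u' v w) u
        + 3 * deriv (fun u' => hN1 k u' v w) u
            * deriv (fun u' => deriv (fun u'' => hN k u'' v w) u') u
        - hN1 k u v w
            * deriv (fun u' => deriv (fun u'' => deriv (fun s => hN k s v w) u'') u') u)
      - 4 * (deriv (fun w' => hN1 k u v w') w * hN k u v w
          - hN1 k u v w * deriv (fun w' => hN k u v w') w)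
      + 3 * p (Fin.last N) ^ 2 *
          (deriv (fun u' => hN1 k u' v w) u * hN k u v w
            - hN1 k u v w * deriv (fun u' => hN k u' v w) u)
      = 0) := by
  obtain ⟨m, rfl⟩ : ∃ m, N = m + 1 := Nat.exists_eq_succ_of_ne_zero hNpos.ne'
  have hpos := isReducedKPFlow_planeWave k hp
  have hneg := isReducedKPFlow_planeWave k fun i => neg_ne_zero.2 (hp i)
  simp only [neg_sq] at hneg
  have hflow : IsReducedKPFlow (fun u v w i (n : ℕ) => g i (k + n) u v w) fun i => p i ^ 2 := by
    convert! hpos.linearCombination hneg α β using 6 with u v w i n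
    rw [hg, planeWave, planeWave]
    ring_nf
  simpa only [forall_and] using stmt_14_general hflow (hhN1 k) (hhN k)
end

section
/- Fix an integer k and a positive integer N. Let F be the N×N real matrix with entries F_{ij} = α_i p_i^{k+j−1} e^{η_i} + β_i q_i^{k+j−1} e^{ξ_i} (1 ≤ i, j ≤ N), where η_i, ξ_i are arbitrary real numbers and the parameters satisfy q_N < q_{N−1} < ⋯ < q_1 < 0 < p_1 < p_2 < ⋯ < p_N, α_i > 0, and sgn β_i = (−1)^{k+i−1} for i = 1,…,N. Then det F > 0. -/
/-!
Absorb the factors `p_i ^ k e ^ η_i` and `q_i ^ k e ^ ξ_i` into the coefficients, so that row `i` of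
`F` is `a_i (1, p_i, p_i², …) + b_i (1, q_i, q_i², …)` with `a_i > 0` and `(-1) ^ i b_i > 0`, rows
being counted from `0`. Expanding `det F` by multilinearity in the rows gives one scaled Vandermonde
determinant for each choice of `p_i` or `q_i` as the `i`-th node. Each of them is positive: a node
`p_j` exceeds all earlier nodes, while a node `q_j` lies below all of them, so its `j` negative
Vandermonde factors contribute the sign `(-1) ^ j`, which is that of `b_j`.
-/

theorem det_add_eq_sum_det_ite {n R : Type*} [Fintype n] [DecidableEq n] [CommRing R]
    (A B : Matrix n n R) :
    (A + B).det = ∑ s : Finset n, (Matrix.of fun i => if i ∈ s then A i else B i).det :=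
  Matrix.detRowAlternating.map_add_univ A B

section Vandermonde

open Finset Matrix

variable {R : Type*} [CommRing R] {N : ℕ}

theorem det_mul_pow_eq_prod (c x : Fin N → R) :
    (of fun i j : Fin N => c i * x i ^ (j : ℕ)).det = ∏ j, c j * ∏ i ∈ Iio j, (x j - x i) := by
  calc (of fun i j : Fin N => c i * x i ^ (j : ℕ)).det
      = (∏ j, c j) * (vandermonde x).det := det_mul_column c (vandermonde x)
    _ = (∏ j, c j) * ∏ j, ∏ i ∈ Iio j, (x j - x i) := by
        rw [det_vandermonde, prod_comm' (t' := univ) (s' := Iio) (by simp)]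
    _ = ∏ j, c j * ∏ i ∈ Iio j, (x j - x i) := prod_mul_distrib.symm

theorem prod_Iio_sub_eq_neg_one_pow_mul (x : Fin N → R) (j : Fin N) :
    ∏ i ∈ Iio j, (x j - x i) = (-1) ^ (j : ℕ) * ∏ i ∈ Iio j, (x i - x j) := by
  simp_rw [← neg_sub (x _) (x j), prod_neg, Fin.card_Iio]

theorem det_mul_pow_add_mul_pow_eq_sum (a b p q : Fin N → R) :
    (of fun i j : Fin N => a i * p i ^ (j : ℕ) + b i * q i ^ (j : ℕ)).det =
      ∑ s : Finset (Fin N),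
        (of fun i j : Fin N => s.piecewise a b i * s.piecewise p q i ^ (j : ℕ)).det := by
  refine (det_add_eq_sum_det_ite (of fun i j : Fin N => a i * p i ^ (j : ℕ))
    (of fun i j : Fin N => b i * q i ^ (j : ℕ))).trans (sum_congr rfl fun s _ => ?_)
  congr 1
  ext i j
  by_cases hi : i ∈ s <;> simp [hi]

variable [PartialOrder R] [IsStrictOrderedRing R]

theorem det_mul_pow_pos {c x : Fin N → R}
    (h : ∀ j, (0 < c j ∧ ∀ i < j, x i < x j) ∨ (0 < (-1) ^ (j : ℕ) * c j ∧ ∀ i < j, x j < x i)) :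
    0 < (of fun i j : Fin N => c i * x i ^ (j : ℕ)).det := by
  rw [det_mul_pow_eq_prod]
  refine prod_pos fun j _ => ?_
  rcases h j with ⟨hc, hmax⟩ | ⟨hc, hmin⟩
  · exact mul_pos hc (prod_pos fun i hi => sub_pos.2 (hmax i (mem_Iio.1 hi)))
  · rw [prod_Iio_sub_eq_neg_one_pow_mul, ← mul_assoc, mul_comm (c j)]
    exact mul_pos hc (prod_pos fun i hi => sub_pos.2 (hmin i (mem_Iio.1 hi)))

theorem det_mul_pow_add_mul_pow_pos {a b p q : Fin N → R} (ha : ∀ i, 0 < a i)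
    (hb : ∀ i : Fin N, 0 < (-1) ^ (i : ℕ) * b i) (hp : StrictMono p) (hq : StrictAnti q)
    (hqp : Pairwise fun i j => q i < p j) :
    0 < (of fun i j : Fin N => a i * p i ^ (j : ℕ) + b i * q i ^ (j : ℕ)).det := by
  rw [det_mul_pow_add_mul_pow_eq_sum]
  refine sum_pos (fun s _ => det_mul_pow_pos fun j => ?_) univ_nonempty
  by_cases hj : j ∈ s
  · refine .inl ⟨by simpa [hj] using ha j, fun i hij => ?_⟩
    by_cases hi : i ∈ s
    · simpa [hi, hj] using hp hij
    · simpa [hi, hj] using hqp hij.ne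
  · refine .inr ⟨by simpa [hj] using hb j, fun i hij => ?_⟩
    by_cases hi : i ∈ s
    · simpa [hi, hj] using hqp hij.ne'
    · simpa [hi, hj] using hq hij

end Vandermonde

theorem neg_one_zpow_mul_zpow_pos {K : Type*} [Field K] [LinearOrder K] [IsStrictOrderedRing K]
    {x : K} (hx : x < 0) (k : ℤ) : 0 < (-1) ^ k * x ^ k := by
  rw [← mul_zpow, neg_one_mul]
  exact zpow_pos (neg_pos.2 hx) k

theorem neg_one_pow_mul_mul_zpow_pos {x y : ℝ} {k : ℤ} {n : ℕ}
    (hy : Real.sign y = (-1) ^ (k + n)) (hx : x < 0) : 0 < (-1) ^ n * (y * x ^ k) := by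
  have hy_ne : y ≠ 0 := by
    rintro rfl
    exact zpow_ne_zero _ (neg_ne_zero.2 one_ne_zero) (hy.symm.trans Real.sign_zero)
  have hsign : 0 < (-1) ^ (k + n) * y := hy ▸ Real.sign_mul_pos_of_ne_zero y hy_ne
  have hsquare : (-1 : ℝ) ^ k * (-1) ^ k = 1 := by rw [← mul_zpow]; simp
  calc 0 < (-1) ^ (k + n) * y * ((-1) ^ k * x ^ k) :=
        mul_pos hsign (neg_one_zpow_mul_zpow_pos hx k)
    _ = (-1) ^ n * (y * x ^ k) := by
        rw [zpow_add₀ (neg_ne_zero.2 one_ne_zero), zpow_natCast]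
        linear_combination (-1) ^ n * (y * x ^ k) * hsquare

/-- For the `N×N` matrix `F` with entries
`F_{ij} = α_i p_i^{k+j-1} e^{η_i} + β_i q_i^{k+j-1} e^{ξ_i}`, under the conditions
`q_N < ⋯ < q_1 < 0 < p_1 < ⋯ < p_N`, `α_i > 0`, `sgn β_i = (-1)^{k+i-1}`,
the determinant of `F` is positive. -/
theorem stmt_17 (N : ℕ) (hNpos : 0 < N) (k : ℤ)
    (α β p q η ξ : Fin N → ℝ)
    (hq : StrictAnti q) (hqneg : ∀ i, q i < 0)
    (hppos : ∀ i, 0 < p i) (hpmono : StrictMono p)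
    (hα : ∀ i, 0 < α i)
    (hβ : ∀ i, Real.sign (β i) = (-1 : ℝ) ^ (k + (i.val : ℤ)))
    (F : Matrix (Fin N) (Fin N) ℝ)
    (hF : ∀ i j, F i j =
      α i * p i ^ (k + (j.val : ℤ)) * Real.exp (η i)
        + β i * q i ^ (k + (j.val : ℤ)) * Real.exp (ξ i)) :
    0 < F.det := by
  have hF_eq : F = Matrix.of fun i j : Fin N =>
      α i * p i ^ k * Real.exp (η i) * p i ^ (j : ℕ) +
        β i * q i ^ k * Real.exp (ξ i) * q i ^ (j : ℕ) := by
    ext i j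
    rw [hF, zpow_add₀ (hppos i).ne', zpow_add₀ (hqneg i).ne, zpow_natCast, zpow_natCast,
      Matrix.of_apply]
    ring
  rw [hF_eq]
  refine det_mul_pow_add_mul_pow_pos (fun i => ?_) (fun i => ?_) hpmono hq
    fun i j _ => (hqneg i).trans (hppos j)
  · exact mul_pos (mul_pos (hα i) (zpow_pos (hppos i) k)) (Real.exp_pos _)
  · rw [← mul_assoc]
    exact mul_pos (neg_one_pow_mul_mul_zpow_pos (hβ i) (hqneg i)) (Real.exp_pos _)
end

section
/- Fix a positive integer N. Let real numbers satisfy q_N < q_{N−1} < ⋯ < q_1 < 0 < p_1 < p_2 < ⋯ < p_N. Let 1 ≤ i_1 < i_2 < ⋯ < i_r ≤ N be a nonempty set of indices, and define for n = 1,…,N: ν_n = q_n if n ∈ {i_1,…,i_r} and ν_n = p_n otherwise. Then the Vandermonde-type product satisfies sgn( ∏_{1 ≤ i < j ≤ N} (ν_j − ν_i) ) = (−1)^{i_1 + i_2 + ⋯ + i_r − r}. -/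
/-!
For `i < j` the difference `ν j - ν i` is negative exactly when `j` is selected, whether or not `i`
is. So each selected index `j` contributes one factor `-1` for every index below it.
-/

open Finset

theorem prod_filter_lt_eq_prod_prod_Iio {ι M : Type*} [Fintype ι] [Preorder ι] [DecidableLT ι]
    [LocallyFiniteOrderBot ι] [CommMonoid M] (f : ι × ι → M) :
    ∏ ij with ij.1 < ij.2, f ij = ∏ j, ∏ i ∈ Iio j, f (i, j) :=
  prod_finset_product_right _ _ _ (by simp)

theorem sign_sub_of_lt {ι R : Type*} [Preorder ι] [DecidableEq ι] [AddCommGroup R]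
    [LinearOrder R] [IsOrderedAddMonoid R] {ν : ι → R} {s : Finset ι} (hanti : StrictAntiOn ν s)
    (hmono : StrictMonoOn ν (s : Set ι)ᶜ) (hlt : ∀ i ∈ s, ∀ j ∉ s, ν i < ν j)
    {i j : ι} (hij : i < j) :
    SignType.sign (ν j - ν i) = if j ∈ s then -1 else 1 := by
  split_ifs with hj
  · rw [sign_eq_neg_one_iff, sub_neg]
    by_cases hi : i ∈ s
    · exact hanti hi hj hij
    · exact hlt j hj i hi
  · rw [sign_eq_one_iff, sub_pos]
    by_cases hi : i ∈ s
    · exact hlt i hi j hj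
    · exact hmono hi hj hij

theorem real_sign_eq_coe_sign (x : ℝ) : Real.sign x = (SignType.sign x : ℝ) := by
  rcases lt_trichotomy x 0 with hx | rfl | hx
  · simp [Real.sign_of_neg hx, sign_neg hx]
  · simp
  · simp [Real.sign_of_pos hx, sign_pos hx]

theorem sum_val_add_one_sub_card {N : ℕ} (s : Finset (Fin N)) :
    ∑ n ∈ s, ((n.val : ℤ) + 1) - (#s : ℤ) = (∑ n ∈ s, #(Iio n) : ℕ) := by
  simp [sum_add_distrib]

theorem stmt_19_general {ι R : Type*} [Fintype ι] [Preorder ι] [DecidableLT ι]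
    [LocallyFiniteOrderBot ι] [CommRing R] [LinearOrder R] [IsStrictOrderedRing R]
    {ν : ι → R} {s : Finset ι}
    (hanti : StrictAntiOn ν s) (hmono : StrictMonoOn ν (s : Set ι)ᶜ)
    (hlt : ∀ i ∈ s, ∀ j ∉ s, ν i < ν j) :
    SignType.sign (∏ ij : ι × ι with ij.1 < ij.2, (ν ij.2 - ν ij.1)) =
      (-1) ^ ∑ n ∈ s, #(Iio n) := by
  classical
  calc SignType.sign (∏ ij : ι × ι with ij.1 < ij.2, (ν ij.2 - ν ij.1))
      = ∏ j, ∏ i ∈ Iio j, SignType.sign (ν j - ν i) := by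
        rw [← prod_filter_lt_eq_prod_prod_Iio fun ij ↦ SignType.sign (ν ij.2 - ν ij.1)]
        exact map_prod signHom _ _
    _ = ∏ j, ∏ _i ∈ Iio j, if j ∈ s then -1 else 1 :=
        prod_congr rfl fun j _ ↦ prod_congr rfl fun i hi ↦
          sign_sub_of_lt hanti hmono hlt (mem_Iio.1 hi)
    _ = ∏ j, if j ∈ s then (-1) ^ #(Iio j) else 1 := by
        simp only [prod_const, ite_pow, one_pow]
    _ = (-1) ^ ∑ n ∈ s, #(Iio n) := by
        rw [prod_ite_mem, univ_inter, prod_pow_eq_pow_sum]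

/-- With `q_N < ⋯ < q_1 < 0 < p_1 < ⋯ < p_N` and a nonempty index set
`{i_1 < ⋯ < i_r}`, setting `ν_n = q_n` for selected indices and `ν_n = p_n`
otherwise, the Vandermonde-type product satisfies
`sgn(∏_{i<j} (ν_j - ν_i)) = (-1)^{i_1+⋯+i_r-r}`. -/
theorem stmt_19 (N : ℕ) (hNpos : 0 < N)
    (p q : Fin N → ℝ)
    (hq : StrictAnti q) (hqneg : ∀ i, q i < 0)
    (hppos : ∀ i, 0 < p i) (hpmono : StrictMono p)
    (s : Finset (Fin N)) (hs : s.Nonempty)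
    (ν : Fin N → ℝ)
    (hin : ∀ n ∈ s, ν n = q n)
    (hout : ∀ n ∉ s, ν n = p n) :
    Real.sign (∏ ij ∈ Finset.univ.filter (fun ij : Fin N × Fin N => ij.1 < ij.2),
        (ν ij.2 - ν ij.1)) =
      (-1 : ℝ) ^ ((∑ n ∈ s, ((n.val : ℤ) + 1)) - (s.card : ℤ)) := by
  have hanti : StrictAntiOn ν s := (hq.strictAntiOn _).congr fun n hn ↦ (hin n hn).symm
  have hmono : StrictMonoOn ν (s : Set (Fin N))ᶜ :=
    (hpmono.strictMonoOn _).congr fun n hn ↦ (hout n hn).symm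
  have hlt : ∀ i ∈ s, ∀ j ∉ s, ν i < ν j := fun i hi j hj ↦ by
    rw [hin i hi, hout j hj]
    exact (hqneg i).trans (hppos j)
  rw [real_sign_eq_coe_sign, stmt_19_general hanti hmono hlt, sum_val_add_one_sub_card,
    zpow_natCast, SignType.coe_pow, SignType.coe_neg_one]
end
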